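/- Fix 0 < r < ∞. There exists a constant C = C(r,c) such that uniformly in 1 ≤ k ≤ r log n, the mixing time of the trace of the KCIP on ∪_{i=1}^k Ω_i satisfies τ_mix^{(≤k)} ≤ C n^3 (log n)^{13}. -/

import Mathlib

/-!
The trace of the KCIP on `∪_{i ≤ k} Ω_i` is a reversible chain which is lazy for large `n`, since at
most `4k` sites are free to move. Such a chain with Poincaré constant `Γ` and minimal stationary
mass `ε` mixes in time `O(Γ log (1/ε))` (`mixingTime_le_of_poincare`). Here `Γ = O(n³ (log n)³)` and
`log (1/ε) = O((log n)²)`, so the mixing time is in fact `O(n³ (log n)⁵)`.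

The Dirichlet form of the trace at `f` is the Dirichlet form of the whole process at the harmonic
extension `F` of `f` (`exists_extension_energy`). It is therefore enough to bound
`∑ π (F - a)²` over `∪_{i ≤ k} Ω_i` by the energy of the unrestricted process, for arbitrary `F`, and
in this bound configurations with adjacent particles may be used as intermediate states.

Let `λ = p / (1 - p)`. Adding a particle at an available site `w` of `x` (empty, with no occupied
neighbour) is not a legal move, but its effect on `F` is controlled. The increment
`g(w) = F(x ∪ {w}) - F(x)`, extended by zero to the unavailable sites, varies along an edge of the
torus by a sum of at most three increments of `F` along legal moves (`addInc_edge`), and it vanishes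
at the particles of `x`. A function on the torus vanishing at one site satisfies
`∑ g² ≤ O(n (log n)²) · (energy of g)` (`torus_poincare`, by comparing the values at `v` and `v/2`
along dyadic scales). Weighting by `λ π(x) ≤ π(x ∪ {w})` and summing over `x` gives
`addEnergy_le`. The same Poincaré inequality handles `Ω_1` (`sum_single_le`).

Write `W_i` for the contribution of `Ω_i`. Removing a particle from a configuration of `Ω_{i+1}`
gives `(i + 1) W_{i+1} ≤ 2 λ n W_i + 2 (addEnergy)` (`levelVar_succ_le`). As `λ n = O(1)`, the factors
`2 λ n / (i + 1)` multiply up to at most terms of an exponential series, so every `W_i` is bounded by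
`exp (2 λ n)` times `W_1 + 2 (addEnergy)` (`recursion_bound`). The same recursion with `F = 1` bounds
the total mass of `∪_{i ≤ k} Ω_i` and hence gives `ε` (`condDist_lower`).

Small tori contribute finitely many pairs `(L, k)`, absorbed in the constant.
-/

noncomputable section
open scoped Classical
open Finset

namespace KCIP

/-! ### The two-dimensional discrete torus -/

/-- Vertices of the 2-dimensional discrete torus `Λ(L,2) = ℤ_L²`. -/
abbrev Vertex (L : ℕ) := ZMod L × ZMod L

/-- Nearest-neighbour adjacency on the torus. -/
def adj {L : ℕ} (u v : Vertex L) : Prop :=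
  u - v = (1, 0) ∨ u - v = (0, 1) ∨ v - u = (1, 0) ∨ v - u = (0, 1)

/-- Distance between two elements of `ℤ_L`. -/
def zdist {L : ℕ} [NeZero L] (a b : ZMod L) : ℕ := min (a - b).val (b - a).val

/-- Graph (ℓ¹) distance on the torus. -/
def torusDist {L : ℕ} [NeZero L] (u v : Vertex L) : ℕ :=
  zdist u.1 v.1 + zdist u.2 v.2

/-- Particle configurations on the torus: elements of `{0,1}^{Λ(L,2)}`. -/
abbrev Config (L : ℕ) := Vertex L → Bool

/-- Number of particles of a configuration. -/
def numParticles {L : ℕ} [NeZero L] (x : Config L) : ℕ :=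
  (univ.filter fun v => x v = true).card

/-- The kinetic constraint: `v` has an occupied neighbour in `x`. -/
def hasOccNbr {L : ℕ} (x : Config L) (v : Vertex L) : Prop :=
  ∃ u, adj u v ∧ x u = true

/-! ### Generic finite Markov chain notions -/

section Generic

variable {S : Type*} [Fintype S]

/-- Point mass at `z`. -/
def delta (z : S) : S → ℝ := fun y => if y = z then 1 else 0

/-- One step of the chain applied to a distribution. -/
def evolve (K : S → S → ℝ) (μ : S → ℝ) : S → ℝ := fun y => ∑ x, μ x * K x y

/-- Distribution after `t` steps. -/
def iterDist (K : S → S → ℝ) (μ : S → ℝ) : ℕ → S → ℝ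
  | 0 => μ
  | t + 1 => evolve K (iterDist K μ t)

/-- Total variation distance. -/
def tvDist (μ ν : S → ℝ) : ℝ := (1 / 2) * ∑ x, |μ x - ν x|

/-- Mixing time (to total variation distance `1/4`, from a worst-case starting state). -/
def mixingTime (K : S → S → ℝ) (π : S → ℝ) : ℕ :=
  sInf {t : ℕ | 0 < t ∧ ∀ x : S, tvDist (iterDist K (delta x) t) π < 1 / 4}

/-- Expectation of `g` at time `t` of the chain started at `z`. -/
def expAt (K : S → S → ℝ) (z : S) (t : ℕ) (g : S → ℝ) : ℝ :=
  ∑ y, iterDist K (delta z) t y * g y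

/-- Dirichlet form of a kernel `K` reversible with respect to `π`. -/
def dirichletForm (K : S → S → ℝ) (π : S → ℝ) (f : S → ℝ) : ℝ :=
  (1 / 2) * ∑ x, ∑ y, |f x - f y| ^ 2 * K x y * π x

/-- Variance functional. -/
def varForm (π : S → ℝ) (f : S → ℝ) : ℝ :=
  (1 / 2) * ∑ x, ∑ y, |f x - f y| ^ 2 * π x * π y

/-- Entropy functional used in the definition of the log-Sobolev constant. -/
def entForm (π : S → ℝ) (f : S → ℝ) : ℝ :=
  ∑ x, f x ^ 2 * Real.log (f x ^ 2 / ∑ y, f y ^ 2 * π y) * π x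

/-- Spectral gap `1 - β₁(K)`, via its variational characterization. -/
def spectralGap (K : S → S → ℝ) (π : S → ℝ) : ℝ :=
  sInf {r : ℝ | ∃ f : S → ℝ, varForm π f ≠ 0 ∧ r = dirichletForm K π f / varForm π f}

/-- Log-Sobolev constant `α(K)`, via its variational characterization. -/
def logSobolevConst (K : S → S → ℝ) (π : S → ℝ) : ℝ :=
  sInf {r : ℝ | ∃ f : S → ℝ, entForm π f ≠ 0 ∧ r = dirichletForm K π f / entForm π f}

/-- Uniform distribution on a finite state space. -/
def uniformDist (S : Type*) [Fintype S] : S → ℝ := fun _ => 1 / (Fintype.card S : ℝ)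

/-- Probability of being at `y` at time `t`, having avoided the set `A` at all times
`0, 1, …, t`, for the chain `K` started at `z`. -/
def killedDist (K : S → S → ℝ) (z : S) (A : Set S) : ℕ → S → ℝ
  | 0 => fun y => if y = z ∧ y ∉ A then 1 else 0
  | t + 1 => fun y => if y ∈ A then 0 else ∑ x, killedDist K z A t x * K x y

/-- `P_z[τ_A > T]`, where `τ_A = min {t ≥ 0 : Z_t ∈ A}`. -/
def survProb (K : S → S → ℝ) (z : S) (A : Set S) (T : ℕ) : ℝ :=
  ∑ y, killedDist K z A T y

/-- `E_z[τ_A]`, where `τ_A = min {t ≥ 0 : Z_t ∈ A}`. -/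
def hitTimeExp (K : S → S → ℝ) (z : S) (A : Set S) : ℝ :=
  ∑' T : ℕ, survProb K z A T

/-- Probability that the chain started at `z` follows the trajectory `ω` up to time `T`. -/
def pathProb (K : S → S → ℝ) (z : S) (T : ℕ) (ω : Fin (T + 1) → S) : ℝ :=
  (if ω 0 = z then 1 else 0) * ∏ t : Fin T, K (ω t.castSucc) (ω t.succ)

/-- Expectation of a path functional of the trajectory up to time `T`. -/
def expPath (K : S → S → ℝ) (z : S) (T : ℕ) (f : (Fin (T + 1) → S) → ℝ) : ℝ :=
  ∑ ω : Fin (T + 1) → S, pathProb K z T ω * f ω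

/-- Probability of a path event of the trajectory up to time `T`. -/
def prPath (K : S → S → ℝ) (z : S) (T : ℕ) (E : (Fin (T + 1) → S) → Prop) : ℝ :=
  ∑ ω : Fin (T + 1) → S, if E ω then pathProb K z T ω else 0

/-- Probability of going from `x` to `z` in `t` steps, all of whose destinations
avoid the set `A`. -/
def tabooPow (K : S → S → ℝ) (A : Set S) : ℕ → S → S → ℝ
  | 0 => fun x y => if y = x then 1 else 0
  | t + 1 => fun x y => ∑ z, tabooPow K A t x z * (if y ∈ A then 0 else K z y)

/-- The transition kernel of the trace of the chain `K` on the set `A`. -/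
def traceKernel (K : S → S → ℝ) (A : Set S) : {x // x ∈ A} → {x // x ∈ A} → ℝ :=
  fun x y => ∑' t : ℕ, ∑ z, tabooPow K A t x.1 z * K z y.1

/-- A distribution `π` conditioned on the set `A`. -/
def condDist (π : S → ℝ) (A : Set S) : {x // x ∈ A} → ℝ :=
  fun x => π x.1 / ∑ y : {x // x ∈ A}, π y.1

end Generic

/-- Extend a finite trajectory to all times, by repeating the final state. -/
def extendPath {S : Type*} {T : ℕ} (ω : Fin (T + 1) → S) : ℕ → S :=
  fun t => ω ⟨min t T, Nat.lt_succ_of_le (min_le_right t T)⟩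

/-- The alternating hitting times of the sets `A` and `B` along a trajectory `ω`:
`altTimes ω A B (j-1) = (τ^A(j), τ^B(j))` where `τ^A(1) = inf {t : ω t ∈ A}`,
`τ^B(1) = inf {t : ω t ∈ B}`, `τ^A(j+1) = inf {t > τ^B(j) : ω t ∈ A}` and
`τ^B(j+1) = inf {t > τ^A(j) : ω t ∈ B}`. -/
def altTimes {S : Type*} (ω : ℕ → S) (A B : Set S) : ℕ → ℕ∞ × ℕ∞
  | 0 => (⨅ t ∈ {t : ℕ | ω t ∈ A}, (t : ℕ∞), ⨅ t ∈ {t : ℕ | ω t ∈ B}, (t : ℕ∞))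
  | j + 1 =>
      (⨅ t ∈ {t : ℕ | (altTimes ω A B j).2 < (t : ℕ∞) ∧ ω t ∈ A}, (t : ℕ∞),
       ⨅ t ∈ {t : ℕ | (altTimes ω A B j).1 < (t : ℕ∞) ∧ ω t ∈ B}, (t : ℕ∞))

/-! ### The kinetically constrained Ising process -/

/-- Transition kernel of the KCIP on `Λ(L,2)` with density `p`. -/
def kcipKernel (L : ℕ) [NeZero L] (p : ℝ) (x y : Config L) : ℝ :=
  (1 / ((L : ℝ) ^ 2)) * ∑ v : Vertex L,
    if hasOccNbr x v then
      p * (if y = Function.update x v true then 1 else 0)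
        + (1 - p) * (if y = Function.update x v false then 1 else 0)
    else (if y = x then 1 else 0)

/-- Stationary distribution of the KCIP on `Λ(L,2)` with density `p`. -/
def kcipStationary (L : ℕ) [NeZero L] (p : ℝ) (y : Config L) : ℝ :=
  if 0 < numParticles y then
    p ^ numParticles y * (1 - p) ^ (L ^ 2 - numParticles y) / (1 - (1 - p) ^ (L ^ 2))
  else 0

/-- `Ω_k`: configurations with `k` particles, no two of them adjacent. -/
def OmegaSet (L k : ℕ) [NeZero L] : Set (Config L) :=
  {x | numParticles x = k ∧ ∀ u v : Vertex L, adj u v → ¬(x u = true ∧ x v = true)}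

/-- `Ω_k` as a type. -/
abbrev OmegaType (L k : ℕ) [NeZero L] := {x : Config L // x ∈ OmegaSet L k}

/-- `Ω_k` as a finite set of configurations. -/
def omegaFinset (L k : ℕ) [NeZero L] : Finset (Config L) :=
  univ.filter fun x => x ∈ OmegaSet L k

/-- `∪_{i=1}^k Ω_i`. -/
def omegaUnionSet (L k : ℕ) [NeZero L] : Set (Config L) :=
  ⋃ i ∈ Finset.Icc 1 k, OmegaSet L i

/-- `Ω_i ∪ Ω_{i+1}` as a type. -/
abbrev PairType (L i : ℕ) [NeZero L] :=
  {x : Config L // x ∈ OmegaSet L i ∪ OmegaSet L (i + 1)}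

/-- `P_i`: the restriction of the KCIP kernel to `Ω_i ∪ Ω_{i+1}`. -/
def pairKernel (L i : ℕ) [NeZero L] (p : ℝ) : PairType L i → PairType L i → ℝ :=
  fun x y =>
    if x = y then 1 - ∑ z : PairType L i, (if z = x then 0 else kcipKernel L p x.1 z.1)
    else kcipKernel L p x.1 y.1

/-! ### The "perfect" kernel `L^{MH}_{n,k}` on `Ω_{n,k}` -/

/-- The kernel `L^{MH}_{n,k}(x,y) = 1/(2|Ω_{n,k}|) + (1/2)·1_{x=y}`. -/
def perfectKernel (L k : ℕ) [NeZero L] : OmegaType L k → OmegaType L k → ℝ :=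
  fun x y => 1 / (2 * (Fintype.card (OmegaType L k) : ℝ)) + if x = y then 1 / 2 else 0

/-! ### Bernoulli–Laplace diffusion -/

/-- Bernoulli–Laplace kernel `U'_{n,k}`: move a uniformly chosen occupied site to a
uniformly chosen unoccupied site. -/
def blKernel (L k : ℕ) [NeZero L] (x y : Config L) : ℝ :=
  (1 / ((k : ℝ) * ((L : ℝ) ^ 2 - (k : ℝ)))) * ∑ u : Vertex L, ∑ v : Vertex L,
    if x u = true ∧ x v = false ∧
        y = Function.update (Function.update x u false) v true then 1 else 0

/-- `U_{n,k} = (1/2) U'_{n,k} + (1/2) Id`. -/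
def blLazy (L k : ℕ) [NeZero L] (x y : Config L) : ℝ :=
  (1 / 2) * blKernel L k x y + (1 / 2) * (if y = x then 1 else 0)

/-- The Metropolis–Hastings kernel `U^{MH}_{n,k}` on `Ω_{n,k}` with proposal `U_{n,k}`
and target the uniform distribution on `Ω_{n,k}`. -/
def blMH (L k : ℕ) [NeZero L] : OmegaType L k → OmegaType L k → ℝ :=
  fun x y =>
    if x = y then 1 - ∑ z : OmegaType L k, (if z = x then 0 else blLazy L k x.1 z.1)
    else blLazy L k x.1 y.1

/-! ### Simple exclusion -/

/-- Swap the labels of vertices `u` and `v`. -/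
def swapConfig {L : ℕ} (x : Config L) (u v : Vertex L) : Config L :=
  Function.update (Function.update x u (x v)) v (x u)

/-- Kernel of the simple exclusion process on `Λ(L,2)`: pick a uniformly random pair of
adjacent vertices and swap their labels. -/
def seKernel (L : ℕ) [NeZero L] (x y : Config L) : ℝ :=
  (1 / ((univ.filter fun q : Vertex L × Vertex L => adj q.1 q.2).card : ℝ)) *
    ∑ u : Vertex L, ∑ v : Vertex L, if adj u v ∧ y = swapConfig x u v then 1 else 0

/-- Adjacency in the graph `G_SE` whose vertices are configurations and whose edges join
distinct configurations with positive simple-exclusion transition probability. -/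
def seAdj (L : ℕ) (x y : Config L) : Prop :=
  y ≠ x ∧ ∃ u v : Vertex L, adj u v ∧ y = swapConfig x u v

/-- `Q_SE`: the `1/2`-lazy simple random walk on the graph `G_SE`. -/
def seLazy (L : ℕ) [NeZero L] (x y : Config L) : ℝ :=
  (1 / 2) * (if y = x then 1 else 0) +
    (1 / 2) * (if seAdj L x y then 1 / ((univ.filter fun z => seAdj L x z).card : ℝ) else 0)

/-- `Q_MH`: the Metropolis–Hastings kernel on `Ω_{n,k}` with proposal `Q_SE` and target
the uniform distribution on `Ω_{n,k}`. -/
def seMH (L k : ℕ) [NeZero L] : OmegaType L k → OmegaType L k → ℝ :=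
  fun x y =>
    if x = y then 1 - ∑ z : OmegaType L k, (if z = x then 0 else seLazy L x.1 z.1)
    else seLazy L x.1 y.1

/-! ### The projected chain `P̃` -/

/-- `π`-measure of a finite set of configurations. -/
def measOf (L : ℕ) [NeZero L] (p : ℝ) (A : Finset (Config L)) : ℝ :=
  ∑ x ∈ A, kcipStationary L p x

/-- The projected kernel `P̃` on `{1, …, k-1}` (`i : Fin (k-1)` represents `i+1`):
`P̃(i,j) = π((Ω_i ∪ Ω_{i+1}) ∩ (Ω_j ∪ Ω_{j+1})) / (3 π(Ω_i ∪ Ω_{i+1}))` for `i ≠ j`. -/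
def projKernel (L k : ℕ) [NeZero L] (p : ℝ) : Fin (k - 1) → Fin (k - 1) → ℝ :=
  fun i j =>
    if i = j then
      1 - ∑ j' ∈ univ.erase i,
        measOf L p ((omegaFinset L (i.1 + 1) ∪ omegaFinset L (i.1 + 2)) ∩
            (omegaFinset L (j'.1 + 1) ∪ omegaFinset L (j'.1 + 2))) /
          (3 * measOf L p (omegaFinset L (i.1 + 1) ∪ omegaFinset L (i.1 + 2)))
    else
      measOf L p ((omegaFinset L (i.1 + 1) ∪ omegaFinset L (i.1 + 2)) ∩
          (omegaFinset L (j.1 + 1) ∪ omegaFinset L (j.1 + 2))) /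
        (3 * measOf L p (omegaFinset L (i.1 + 1) ∪ omegaFinset L (i.1 + 2)))

/-- Stationary distribution of the projected kernel `P̃`. -/
def projStationary (L k : ℕ) [NeZero L] (p : ℝ) : Fin (k - 1) → ℝ :=
  fun i =>
    measOf L p (omegaFinset L (i.1 + 1) ∪ omegaFinset L (i.1 + 2)) /
      ∑ j : Fin (k - 1), measOf L p (omegaFinset L (j.1 + 1) ∪ omegaFinset L (j.1 + 2))

/-! ### Well-spaced configurations -/

/-- `H(i)`: very well-spaced configurations in `Ω_i`. -/
def Hset (L i : ℕ) [NeZero L] : Set (Config L) :=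
  {x | x ∈ OmegaSet L i ∧ ∀ u v : Vertex L, x u = true → x v = true → u ≠ v →
    Real.sqrt ((L : ℝ) ^ 2) / Real.log ((L : ℝ) ^ 2) ^ ((1 : ℝ) / 4) < (torusDist u v : ℝ)}

/-- `G(i)`: configurations in `Ω_{i+1}` obtained from a configuration in `H(i)` by adding
one particle at distance exactly `2` from the existing particles. -/
def Gset (L i : ℕ) [NeZero L] : Set (Config L) :=
  {y | y ∈ OmegaSet L (i + 1) ∧ ∃ x ∈ Hset L i, ∃ w : Vertex L,
    y = Function.update x w true ∧ (∃ u, x u = true ∧ torusDist u w = 2) ∧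
    ∀ u, x u = true → 2 ≤ torusDist u w}

/-! ### Connectivity on the torus -/

/-- `b` is reachable from `a` by a nearest-neighbour path staying inside `A`. -/
def reachIn {L : ℕ} (A : Set (Vertex L)) (a b : Vertex L) : Prop :=
  ∃ (M : ℕ) (y : ℕ → Vertex L), y 0 = a ∧ y M = b ∧
    (∀ j < M, adj (y j) (y (j + 1))) ∧ ∀ j ≤ M, y j ∈ A

/-- A linear key on the vertices, used to pick one representative per connected component. -/
def vkey (L : ℕ) [NeZero L] (v : Vertex L) : ℕ := v.1.val * L + v.2.val

/-- The number of connected components of the subgraph of `Λ(L,2)` induced by the occupied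
vertices of `x` (counting, in each component, the vertex with the least key). -/
def connCompCount (L : ℕ) [NeZero L] (x : Config L) : ℕ :=
  (univ.filter fun v : Vertex L => x v = true ∧
    ∀ u : Vertex L, x u = true → reachIn {w : Vertex L | x w = true} u v →
      vkey L v ≤ vkey L u).card

/-- `𝒞_s`: the number of collisions before time `s` along a trajectory, i.e. of times
`1 ≤ u < s` at which the number of connected components strictly decreases. -/
def collisionCount (L : ℕ) [NeZero L] {T : ℕ} (ω : Fin (T + 1) → Config L) (s : ℕ) : ℕ :=
  ((Finset.range (s - 1)).filter fun u =>
    connCompCount L (extendPath ω (u + 1)) < connCompCount L (extendPath ω u)).card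

/-! ### Squares, coverings and open vertices -/

/-- A square of side length exactly `m` in the torus, with bottom-left corner `a`. -/
def IsSquareSet (L m : ℕ) [NeZero L] (C : Finset (Vertex L)) : Prop :=
  ∃ a : Vertex L, C = (Finset.range m ×ˢ Finset.range m).image
    fun q : ℕ × ℕ => a + ((q.1 : ZMod L), (q.2 : ZMod L))

/-- A (not necessarily disjoint) union of at most `k` squares of side length exactly `m`. -/
def IsUnionOfSquares (L m k : ℕ) [NeZero L] (C : Finset (Vertex L)) : Prop :=
  ∃ (j : ℕ) (sq : Fin j → Finset (Vertex L)), j ≤ k ∧ (∀ a, IsSquareSet L m (sq a)) ∧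
    C = Finset.univ.biUnion sq

/-- A size-`m` covering of the finite vertex set `X`. -/
structure SizeMCovering (L m : ℕ) [NeZero L] (X : Finset (Vertex L)) {ℓ : ℕ}
    (C : Fin ℓ → Finset (Vertex L)) : Prop where
  pairwise_disjoint : ∀ i j, i ≠ j → Disjoint (C i) (C j)
  union_of_squares : ∀ i, IsUnionOfSquares L m X.card (C i)
  covers : ∀ u : Vertex L, (∃ v ∈ X, torusDist u v ≤ 2) → ∃ i, u ∈ C i
  meets : ∀ i, ∃ v ∈ X, v ∈ C i

/-- The vertex `xi` of the configuration `X` is *open* with respect to the privileged point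
`x'` and the covering `C`: there is a nearest-neighbour path from `xi` to the complement of
the covering which stays at distance `> 1` from `(X ∪ {x'}) \ {xi}`. -/
def IsOpenVertex (L : ℕ) [NeZero L] (X : Finset (Vertex L)) (x' : Vertex L) {ℓ : ℕ}
    (C : Fin ℓ → Finset (Vertex L)) (xi : Vertex L) : Prop :=
  ∃ (M : ℕ) (y : ℕ → Vertex L), y 0 = xi ∧ (∀ i, y M ∉ C i) ∧
    (∀ j < M, torusDist (y (j + 1)) (y j) = 1) ∧
    ∀ x ∈ (insert x' X).erase xi, ∀ j ≤ M, 1 < torusDist x (y j)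

/-- The configuration `{xs 0, …, xs (k-1)}` admits a *sequence of open vertices* with
respect to the privileged point `x'` and the covering `C`. -/
def HasOpenSequence (L k : ℕ) [NeZero L] (xs : Fin k → Vertex L) (x' : Vertex L) {ℓ : ℕ}
    (C : Fin ℓ → Finset (Vertex L)) : Prop :=
  ∃ σ : Equiv.Perm (Fin k), ∀ i : Fin k, i.1 + 1 < k →
    IsOpenVertex L
      ((univ.filter fun j : Fin k => ∀ j' : Fin k, j' < i → σ j' ≠ j).image xs)
      x' C (xs (σ i))

/-! ### Metropolis–Hastings walk on a component (for Statement 9) -/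

/-- The Metropolis–Hastings chain on `D` whose proposal is the `1/2`-lazy simple random
walk on `Λ(L,2)` and whose target is the uniform distribution on `D`: each neighbour in `D`
is moved to with probability `1/8`, otherwise the chain holds. -/
def dKernel (L : ℕ) [NeZero L] (D : Finset (Vertex L)) :
    {u // u ∈ D} → {u // u ∈ D} → ℝ :=
  fun x y =>
    if x = y then 1 - ((D.filter fun w => adj w x.1).card : ℝ) / 8
    else if adj x.1 y.1 then 1 / 8 else 0


/-! ### Mixing from a Poincaré inequality -/

section Mixing

variable {S : Type*} [Fintype S]

/-- The action of a kernel on functions, `(P f)(x) = ∑ y, K x y * f y`. -/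
def applyK (K : S → S → ℝ) (f : S → ℝ) : S → ℝ := fun x => ∑ y, K x y * f y

/-- The Dirichlet form with respect to a reversible weight `π` (not necessarily normalized). -/
def energy (K : S → S → ℝ) (π : S → ℝ) (f : S → ℝ) : ℝ :=
  (1 / 2) * ∑ x, ∑ y, π x * K x y * (f x - f y) ^ 2

lemma energy_eq (K : S → S → ℝ) (π : S → ℝ) (hK1 : ∀ x, π x ≠ 0 → ∑ y, K x y = 1)
    (hrev : ∀ x y, π x * K x y = π y * K y x) (f : S → ℝ) :
    energy K π f = ∑ x, π x * f x ^ 2 - ∑ x, π x * f x * applyK K f x := by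
  have hrow : ∀ x, π x * ∑ y, K x y = π x := by
    intro x
    by_cases h : π x = 0
    · simp [h]
    · rw [hK1 x h, mul_one]
  have h1 : ∑ x, ∑ y, π x * K x y * f x ^ 2 = ∑ x, π x * f x ^ 2 := by
    refine Finset.sum_congr rfl fun x _ => ?_
    rw [← Finset.sum_mul, ← Finset.mul_sum, hrow]
  have h2 : ∑ x, ∑ y, π x * K x y * f y ^ 2 = ∑ x, π x * f x ^ 2 := by
    rw [Finset.sum_comm, ← h1]
    refine Finset.sum_congr rfl fun x _ => Finset.sum_congr rfl fun y _ => ?_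
    rw [hrev]
  have h3 : ∑ x, ∑ y, π x * K x y * (f x * f y) = ∑ x, π x * f x * applyK K f x := by
    refine Finset.sum_congr rfl fun x _ => ?_
    rw [applyK, Finset.mul_sum]
    exact Finset.sum_congr rfl fun y _ => by ring
  have h4 : ∑ x, ∑ y, π x * K x y * (f x - f y) ^ 2 =
      ∑ x, ∑ y, π x * K x y * f x ^ 2 + ∑ x, ∑ y, π x * K x y * f y ^ 2
        - 2 * ∑ x, ∑ y, π x * K x y * (f x * f y) := by
    rw [Finset.mul_sum, ← Finset.sum_add_distrib, ← Finset.sum_sub_distrib]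
    refine Finset.sum_congr rfl fun x _ => ?_
    rw [Finset.mul_sum, ← Finset.sum_add_distrib, ← Finset.sum_sub_distrib]
    exact Finset.sum_congr rfl fun y _ => by ring
  rw [energy, h4, h1, h2, h3]
  ring

/-- One step of a lazy chain decreases the second moment by at least the Dirichlet form: writing
`P f = f - d`, the cross term is twice the energy, and laziness bounds `∑ π d²` by the energy. -/
lemma sum_applyK_sq_le (K : S → S → ℝ) (π : S → ℝ) (hπ : ∀ x, 0 < π x)
    (hK0 : ∀ x y, 0 ≤ K x y) (hK1 : ∀ x, ∑ y, K x y = 1)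
    (hrev : ∀ x y, π x * K x y = π y * K y x) (hlazy : ∀ x, 1 / 2 ≤ K x x) (f : S → ℝ) :
    ∑ x, π x * applyK K f x ^ 2 ≤ ∑ x, π x * f x ^ 2 - energy K π f := by
  have hE := energy_eq K π (fun x _ => hK1 x) hrev f
  have hd : ∀ x, f x - applyK K f x = ∑ y ∈ univ.erase x, K x y * (f x - f y) := by
    intro x
    have : ∑ y ∈ univ.erase x, K x y * (f x - f y) = ∑ y, K x y * (f x - f y) := by
      refine Finset.sum_subset (Finset.erase_subset _ _) ?_
      intro y _ hy
      have : y = x := by simpa using hy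
      simp [this]
    rw [this, applyK]
    simp only [mul_sub, Finset.sum_sub_distrib, ← Finset.sum_mul, hK1, one_mul]
  have hoff : ∀ x, ∑ y ∈ univ.erase x, K x y ≤ 1 / 2 := by
    intro x
    have := Finset.add_sum_erase univ (fun y => K x y) (Finset.mem_univ x)
    have h1 := hK1 x
    have h2 := hlazy x
    linarith
  have hd2 : ∀ x, (f x - applyK K f x) ^ 2 ≤ 1 / 2 * ∑ y, K x y * (f x - f y) ^ 2 := by
    intro x
    rw [hd]
    have hcs := Finset.sum_sq_le_sum_mul_sum_of_sq_le_mul (univ.erase x)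
      (r := fun y => K x y * (f x - f y)) (f := fun y => K x y)
      (g := fun y => K x y * (f x - f y) ^ 2) (fun y _ => hK0 x y)
      (fun y _ => mul_nonneg (hK0 x y) (sq_nonneg _)) (fun y _ => le_of_eq (by ring))
    refine hcs.trans ?_
    have hsub : ∑ y ∈ univ.erase x, K x y * (f x - f y) ^ 2 ≤ ∑ y, K x y * (f x - f y) ^ 2 :=
      Finset.sum_le_sum_of_subset_of_nonneg (Finset.erase_subset _ _)
        (fun y _ _ => mul_nonneg (hK0 x y) (sq_nonneg _))
    exact mul_le_mul (hoff x) hsub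
      (Finset.sum_nonneg fun y _ => mul_nonneg (hK0 x y) (sq_nonneg _)) (by norm_num)
  have hsum : ∑ x, π x * (f x - applyK K f x) ^ 2 ≤ energy K π f := by
    rw [energy, Finset.mul_sum]
    refine Finset.sum_le_sum fun x _ => ?_
    refine (mul_le_mul_of_nonneg_left (hd2 x) (hπ x).le).trans (le_of_eq ?_)
    rw [Finset.mul_sum, Finset.mul_sum, Finset.mul_sum]
    exact Finset.sum_congr rfl fun y _ => by ring
  have hexp : ∑ x, π x * applyK K f x ^ 2 = ∑ x, π x * (f x - applyK K f x) ^ 2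
      + 2 * ∑ x, π x * f x * applyK K f x - ∑ x, π x * f x ^ 2 := by
    rw [Finset.mul_sum, ← Finset.sum_add_distrib, ← Finset.sum_sub_distrib]
    exact Finset.sum_congr rfl fun x _ => by ring
  linarith

/-- A lazy reversible chain with Poincaré constant `Γ` mixes by any time `t` for which
`exp (-t/Γ)` is less than a quarter of the smallest stationary probability. -/
theorem mixingTime_le_of_poincare (K : S → S → ℝ) (π : S → ℝ) (hπ : ∀ x, 0 < π x)
    (hK0 : ∀ x y, 0 ≤ K x y) (hK1 : ∀ x, ∑ y, K x y = 1)
    (hrev : ∀ x y, π x * K x y = π y * K y x) (hlazy : ∀ x, 1 / 2 ≤ K x x)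
    (hsum : ∑ x, π x = 1) (Γ : ℝ) (hΓ : 0 < Γ)
    (hP : ∀ f : S → ℝ, ∃ a : ℝ, ∑ x, π x * (f x - a) ^ 2 ≤ Γ * energy K π f)
    (ε : ℝ) (hε : 0 < ε) (hmin : ∀ x, ε ≤ π x) (t : ℕ) (ht0 : 0 < t)
    (ht : Real.exp (-(t / Γ)) < ε / 4) : mixingTime K π ≤ t := by
  have hcontr : ∀ f : S → ℝ, ∑ x, π x * f x = 0 →
      ∑ x, π x * applyK K f x ^ 2 ≤ Real.exp (-(1 / Γ)) * ∑ x, π x * f x ^ 2 := by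
    intro f hf
    obtain ⟨a, ha⟩ := hP f
    have h1 := sum_applyK_sq_le K π hπ hK0 hK1 hrev hlazy f
    have h2 : ∑ x, π x * (f x - a) ^ 2 = ∑ x, π x * f x ^ 2 + a ^ 2 := by
      have : ∑ x, π x * (f x - a) ^ 2 =
          ∑ x, π x * f x ^ 2 - 2 * a * ∑ x, π x * f x + a ^ 2 * ∑ x, π x := by
        rw [Finset.mul_sum, Finset.mul_sum, ← Finset.sum_sub_distrib, ← Finset.sum_add_distrib]
        exact Finset.sum_congr rfl fun x _ => by ring
      rw [this, hf, hsum]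
      ring
    have h3 : (1 / Γ) * ∑ x, π x * f x ^ 2 ≤ energy K π f := by
      rw [one_div, inv_mul_le_iff₀ hΓ]
      nlinarith [sq_nonneg a]
    have h4 : 0 ≤ ∑ x, π x * f x ^ 2 :=
      Finset.sum_nonneg fun x _ => mul_nonneg (hπ x).le (sq_nonneg _)
    have h5 := Real.add_one_le_exp (-(1 / Γ))
    nlinarith [mul_le_mul_of_nonneg_right h5 h4]
  have hmean : ∀ f : S → ℝ, ∑ x, π x * applyK K f x = ∑ x, π x * f x := by
    intro f
    simp only [applyK, Finset.mul_sum]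
    rw [Finset.sum_comm]
    refine Finset.sum_congr rfl fun y _ => ?_
    calc ∑ x, π x * (K x y * f y) = ∑ x, π y * f y * K y x := by
          refine Finset.sum_congr rfl fun x _ => ?_
          rw [← mul_assoc, hrev]; ring
      _ = π y * f y := by rw [← Finset.mul_sum, hK1, mul_one]
  refine Nat.sInf_le ⟨ht0, fun x₀ => ?_⟩
  set f₀ : S → ℝ := fun y => (if y = x₀ then 1 / π x₀ else 0) - 1 with hf₀
  -- `1 + F s` is the density with respect to `π` of the law at time `s`
  set F : ℕ → S → ℝ := fun s => (applyK K)^[s] f₀ with hF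
  have hFs : ∀ s, F (s + 1) = applyK K (F s) := fun s => Function.iterate_succ_apply' _ _ _
  have hdist : ∀ s y, iterDist K (delta x₀) s y = π y * (1 + F s y) := by
    intro s
    induction s with
    | zero =>
      intro y
      have := (hπ x₀).ne'
      by_cases h : y = x₀
      · subst h
        simp [iterDist, delta, hF, hf₀, this]
      · simp [iterDist, delta, hF, hf₀, h]
    | succ s ih =>
      intro y
      simp only [iterDist, evolve, ih, hFs, applyK]
      calc ∑ x, π x * (1 + F s x) * K x y = ∑ x, (π y * K y x + π y * (K y x * F s x)) := by
            refine Finset.sum_congr rfl fun x _ => ?_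
            linear_combination (1 + F s x) * hrev x y
        _ = π y * (1 + ∑ x, K y x * F s x) := by
            rw [Finset.sum_add_distrib, ← Finset.mul_sum, ← Finset.mul_sum, hK1]; ring
  have hmean0 : ∀ s, ∑ x, π x * F s x = 0 := by
    intro s
    induction s with
    | zero =>
      have := (hπ x₀).ne'
      simp [hF, hf₀, mul_sub, Finset.sum_sub_distrib, hsum, this]
    | succ s ih => rw [hFs, hmean, ih]
  have hV0 : ∑ x, π x * F 0 x ^ 2 ≤ 1 / ε := by
    have h1 : ∑ x, π x * F 0 x ^ 2 = 1 / π x₀ - 1 := by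
      have hne := (hπ x₀).ne'
      have h2 : ∀ x, π x * F 0 x ^ 2 = (if x = x₀ then 1 / π x₀ - 2 else 0) + π x := by
        intro x
        by_cases h : x = x₀
        · subst h
          simp [hF, hf₀]
          field_simp
          ring
        · simp [hF, hf₀, h]
      simp_rw [h2]
      rw [Finset.sum_add_distrib, hsum]
      simp
      ring
    rw [h1]
    have := one_div_le_one_div_of_le hε (hmin x₀)
    linarith
  have hV : ∀ s : ℕ, ∑ x, π x * F s x ^ 2 ≤ Real.exp (-(s / Γ)) * (1 / ε) := by
    intro s
    induction s with
    | zero => simpa using hV0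
    | succ s ih =>
      rw [hFs]
      refine (hcontr _ (hmean0 s)).trans ?_
      refine (mul_le_mul_of_nonneg_left ih (Real.exp_pos _).le).trans (le_of_eq ?_)
      rw [← mul_assoc, ← Real.exp_add]
      congr 2
      push_cast
      ring
  have hVt : ∑ x, π x * F t x ^ 2 < 1 / 4 := by
    refine (hV t).trans_lt ?_
    rw [mul_one_div, div_lt_iff₀ hε]
    linarith
  have htv : tvDist (iterDist K (delta x₀) t) π = (1 / 2) * ∑ x, π x * |F t x| := by
    rw [tvDist]
    congr 1
    refine Finset.sum_congr rfl fun x _ => ?_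
    rw [hdist, mul_add, mul_one, add_sub_cancel_left, abs_mul, abs_of_pos (hπ x)]
  have hcs : (∑ x, π x * |F t x|) ^ 2 ≤ (∑ x, π x) * ∑ x, π x * F t x ^ 2 :=
    Finset.sum_sq_le_sum_mul_sum_of_sq_le_mul univ (fun x _ => (hπ x).le)
      (fun x _ => mul_nonneg (hπ x).le (sq_nonneg _))
      (fun x _ => le_of_eq (by rw [mul_pow, sq_abs]; ring))
  rw [hsum, one_mul] at hcs
  have hlt : ∑ x, π x * |F t x| < 1 / 2 := by
    refine lt_of_pow_lt_pow_left₀ 2 (by norm_num) ?_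
    linarith
  rw [htv]
  linarith

end Mixing

/-! ### The trace of a reversible chain -/

section Trace

variable {S : Type*} [Fintype S]

/-- Probability of leaving `x`, then spending the next `t` steps outside `A`, and being at `y` at
time `t + 1`. -/
def excursion (K : S → S → ℝ) (A : Set S) (t : ℕ) (x y : S) : ℝ :=
  ∑ z, tabooPow K A t x z * K z y

/-- Probability, starting from `x`, that `y ∈ A` is the first point of `A` visited at a positive
time. This is `traceKernel` with the starting point allowed to lie outside `A`. -/
def hitKernel (K : S → S → ℝ) (A : Set S) (x y : S) : ℝ := ∑' t : ℕ, excursion K A t x y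

lemma tabooPow_nonneg (K : S → S → ℝ) (A : Set S) (hK0 : ∀ x y, 0 ≤ K x y) (t : ℕ) (x y : S) :
    0 ≤ tabooPow K A t x y := by
  induction t generalizing y with
  | zero => simp only [tabooPow]; split_ifs <;> norm_num
  | succ t ih =>
    simp only [tabooPow]
    refine Finset.sum_nonneg fun z _ => mul_nonneg (ih z) ?_
    split_ifs
    · exact le_rfl
    · exact hK0 _ _

lemma excursion_nonneg (K : S → S → ℝ) (A : Set S) (hK0 : ∀ x y, 0 ≤ K x y) (t : ℕ) (x y : S) :
    0 ≤ excursion K A t x y :=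
  Finset.sum_nonneg fun z _ => mul_nonneg (tabooPow_nonneg K A hK0 t x z) (hK0 z y)

lemma excursion_zero (K : S → S → ℝ) (A : Set S) (x y : S) : excursion K A 0 x y = K x y := by
  simp [excursion, tabooPow]

lemma tabooPow_succ (K : S → S → ℝ) (A : Set S) (t : ℕ) (x y : S) :
    tabooPow K A (t + 1) x y = if y ∈ A then 0 else excursion K A t x y := by
  simp only [tabooPow, excursion]
  split_ifs <;> simp

/-- Decomposition at the last step. -/
lemma excursion_succ (K : S → S → ℝ) (A : Set S) (t : ℕ) (x y : S) :
    excursion K A (t + 1) x y = ∑ z, (if z ∈ A then 0 else excursion K A t x z) * K z y := by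
  simp only [excursion.eq_def K A (t + 1), tabooPow_succ]

/-- Decomposition at the first step. -/
lemma excursion_succ' (K : S → S → ℝ) (A : Set S) (t : ℕ) (x y : S) :
    excursion K A (t + 1) x y = ∑ z, K x z * (if z ∈ A then 0 else excursion K A t z y) := by
  induction t generalizing y with
  | zero =>
    rw [excursion_succ]
    refine Finset.sum_congr rfl fun z _ => ?_
    simp only [excursion_zero]
    split_ifs <;> simp
  | succ t ih =>
    rw [excursion_succ]
    simp_rw [ih]
    have h1 : ∀ z, (if z ∈ A then 0 else excursion K A (t + 1) z y) =
        ∑ w, (if z ∈ A then 0 else (if w ∈ A then 0 else excursion K A t z w) * K w y) := by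
      intro z
      split_ifs with h
      · simp
      · rw [excursion_succ]
    simp_rw [h1, Finset.mul_sum]
    rw [Finset.sum_comm]
    refine Finset.sum_congr rfl fun w _ => ?_
    split_ifs with h
    · simp
    · rw [Finset.sum_mul]
      refine Finset.sum_congr rfl fun z _ => ?_
      split_ifs <;> ring

lemma excursion_rev (K : S → S → ℝ) (A : Set S) (π : S → ℝ)
    (hrev : ∀ x y, π x * K x y = π y * K y x) (t : ℕ) (x y : S) :
    π x * excursion K A t x y = π y * excursion K A t y x := by
  induction t generalizing x y with
  | zero => simp only [excursion_zero, hrev]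
  | succ t ih =>
    rw [excursion_succ', excursion_succ, Finset.mul_sum, Finset.mul_sum]
    refine Finset.sum_congr rfl fun z _ => ?_
    split_ifs
    · simp
    · linear_combination excursion K A t z y * hrev x z + K z x * ih z y

/-- Conservation of mass: by time `T` the chain has either returned to `A` or stayed outside. -/
lemma excursion_partial_sum (K : S → S → ℝ) (A : Set S) (hK1 : ∀ x, ∑ y, K x y = 1)
    (T : ℕ) (x : S) :
    ∑ t ∈ Finset.range T, ∑ y, (if y ∈ A then excursion K A t x y else 0)
      + ∑ z, tabooPow K A T x z = 1 := by
  induction T with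
  | zero => simp [tabooPow]
  | succ T ih =>
    rw [Finset.sum_range_succ, ← ih, add_assoc]
    congr 1
    rw [← Finset.sum_add_distrib]
    have h1 : ∀ y, ((if y ∈ A then excursion K A T x y else 0) + tabooPow K A (T + 1) x y)
        = excursion K A T x y := by
      intro y
      rw [tabooPow_succ]
      split_ifs <;> simp
    simp_rw [h1, excursion]
    rw [Finset.sum_comm]
    refine Finset.sum_congr rfl fun z _ => ?_
    rw [← Finset.mul_sum, hK1, mul_one]

lemma excursion_summable (K : S → S → ℝ) (A : Set S) (hK0 : ∀ x y, 0 ≤ K x y)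
    (hK1 : ∀ x, ∑ y, K x y = 1) (x y : S) (hy : y ∈ A) :
    Summable fun t => excursion K A t x y := by
  refine summable_of_sum_range_le (c := 1) (fun t => excursion_nonneg K A hK0 t x y) fun T => ?_
  rw [← excursion_partial_sum K A hK1 T x]
  have h1 : 0 ≤ ∑ z, tabooPow K A T x z :=
    Finset.sum_nonneg fun z _ => tabooPow_nonneg K A hK0 T x z
  have h2 : ∑ t ∈ Finset.range T, excursion K A t x y ≤
      ∑ t ∈ Finset.range T, ∑ y, (if y ∈ A then excursion K A t x y else 0) := by
    refine Finset.sum_le_sum fun t _ => ?_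
    have := Finset.single_le_sum (f := fun y => if y ∈ A then excursion K A t x y else 0)
      (s := univ) (fun z _ => by
        split_ifs
        · exact excursion_nonneg K A hK0 t x z
        · exact le_rfl) (Finset.mem_univ y)
    simpa [hy] using this
  linarith

lemma hitKernel_nonneg (K : S → S → ℝ) (A : Set S) (hK0 : ∀ x y, 0 ≤ K x y) (x y : S) :
    0 ≤ hitKernel K A x y :=
  tsum_nonneg fun t => excursion_nonneg K A hK0 t x y

lemma hitKernel_rev (K : S → S → ℝ) (A : Set S) (π : S → ℝ)
    (hrev : ∀ x y, π x * K x y = π y * K y x) (x y : S) :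
    π x * hitKernel K A x y = π y * hitKernel K A y x := by
  rw [hitKernel, hitKernel, ← tsum_mul_left, ← tsum_mul_left]
  exact tsum_congr fun t => excursion_rev K A π hrev t x y

lemma le_hitKernel (K : S → S → ℝ) (A : Set S) (hK0 : ∀ x y, 0 ≤ K x y)
    (hK1 : ∀ x, ∑ y, K x y = 1) (x y : S) (hy : y ∈ A) : K x y ≤ hitKernel K A x y := by
  rw [← excursion_zero K A x y]
  exact (excursion_summable K A hK0 hK1 x y hy).le_tsum 0
    (fun t _ => excursion_nonneg K A hK0 t x y)

lemma hitKernel_eq (K : S → S → ℝ) (A : Set S) (hK0 : ∀ x y, 0 ≤ K x y)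
    (hK1 : ∀ x, ∑ y, K x y = 1) (x y : S) (hy : y ∈ A) :
    hitKernel K A x y = K x y + ∑ z, K x z * (if z ∈ A then 0 else hitKernel K A z y) := by
  rw [hitKernel, (excursion_summable K A hK0 hK1 x y hy).tsum_eq_zero_add, excursion_zero]
  congr 1
  simp_rw [excursion_succ']
  rw [Summable.tsum_finsetSum]
  · refine Finset.sum_congr rfl fun z _ => ?_
    rw [tsum_mul_left]
    split_ifs
    · simp
    · rfl
  · intro z _
    refine Summable.mul_left _ ?_
    split_ifs
    · exact summable_zero
    · exact excursion_summable K A hK0 hK1 z y hy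

/-- Recurrence: under a stationary weight, the chain started in `A` returns to `A`. The mass of
starting points in `A` that stay away for `T` steps is `u T - u (T + 1)`, where `u T ≥ 0` is the
total mass of starting points that stay away from `A` during steps `1, …, T`. -/
lemma tendsto_taboo_zero (K : S → S → ℝ) (A : Set S) (π : S → ℝ) (hπ : ∀ x, 0 ≤ π x)
    (hK0 : ∀ x y, 0 ≤ K x y) (hK1 : ∀ x, ∑ y, K x y = 1)
    (hrev : ∀ x y, π x * K x y = π y * K y x) (x : S) (hx : x ∈ A) :
    Filter.Tendsto (fun T => π x * ∑ z, tabooPow K A T x z) Filter.atTop (nhds 0) := by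
  set m : ℕ → S → ℝ := fun T y => ∑ z, tabooPow K A T y z with hm
  have hm0 : ∀ T y, 0 ≤ m T y := fun T y =>
    Finset.sum_nonneg fun z _ => tabooPow_nonneg K A hK0 T y z
  have hmsucc : ∀ T y, m (T + 1) y = ∑ w, K y w * (if w ∈ A then 0 else m T w) := by
    intro T y
    cases T with
    | zero =>
      have hm00 : ∀ w, m 0 w = 1 := by intro w; simp [hm, tabooPow]
      simp only [hm00]
      simp only [hm, tabooPow_succ, excursion_zero]
      refine Finset.sum_congr rfl fun z _ => ?_
      split_ifs <;> simp
    | succ T =>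
      have h1 : ∀ w, (if w ∈ A then 0 else m (T + 1) w) =
          ∑ z, (if w ∈ A then 0 else if z ∈ A then 0 else excursion K A T w z) := by
        intro w
        split_ifs with h
        · simp
        · simp only [hm, tabooPow_succ]
      simp_rw [h1, Finset.mul_sum]
      rw [Finset.sum_comm]
      simp only [hm, tabooPow_succ _ _ (T + 1), excursion_succ']
      refine Finset.sum_congr rfl fun z _ => ?_
      split_ifs with h
      · simp
      · refine Finset.sum_congr rfl fun w _ => ?_
        rfl
  set u : ℕ → ℝ := fun T => ∑ y, π y * m T y with hu
  have hstep : ∀ T, u (T + 1) = u T - ∑ y, π y * (if y ∈ A then m T y else 0) := by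
    intro T
    have h1 : u (T + 1) = ∑ w, π w * (if w ∈ A then 0 else m T w) := by
      simp only [hu, hmsucc, Finset.mul_sum]
      rw [Finset.sum_comm]
      refine Finset.sum_congr rfl fun w _ => ?_
      calc ∑ y, π y * (K y w * if w ∈ A then 0 else m T w)
          = ∑ y, (π w * if w ∈ A then 0 else m T w) * K w y := by
            refine Finset.sum_congr rfl fun y _ => ?_
            rw [← mul_assoc, hrev]; ring
        _ = _ := by rw [← Finset.mul_sum, hK1, mul_one]
    rw [h1, hu, ← Finset.sum_sub_distrib]
    refine Finset.sum_congr rfl fun w _ => ?_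
    split_ifs <;> ring
  have hle : ∀ T, π x * m T x ≤ u T - u (T + 1) := by
    intro T
    rw [hstep, sub_sub_cancel]
    have := Finset.single_le_sum (f := fun y => π y * (if y ∈ A then m T y else 0))
      (s := univ) (fun z _ => by
        refine mul_nonneg (hπ z) ?_
        split_ifs
        · exact hm0 T z
        · exact le_rfl) (Finset.mem_univ x)
    simpa [hx] using this
  have hu0 : ∀ T, 0 ≤ u T := fun T => Finset.sum_nonneg fun y _ => mul_nonneg (hπ y) (hm0 T y)
  have hsummable : Summable fun T => π x * m T x := by
    refine summable_of_sum_range_le (c := u 0) (fun T => mul_nonneg (hπ x) (hm0 T x)) fun N => ?_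
    calc ∑ T ∈ Finset.range N, π x * m T x ≤ ∑ T ∈ Finset.range N, (u T - u (T + 1)) :=
          Finset.sum_le_sum fun T _ => hle T
      _ = u 0 - u N := Finset.sum_range_sub' u N
      _ ≤ u 0 := by linarith [hu0 N]
  exact hsummable.tendsto_atTop_zero

lemma hitKernel_row_sum (K : S → S → ℝ) (A : Set S) (π : S → ℝ) (hπ : ∀ x, 0 ≤ π x)
    (hK0 : ∀ x y, 0 ≤ K x y) (hK1 : ∀ x, ∑ y, K x y = 1)
    (hrev : ∀ x y, π x * K x y = π y * K y x) (x : S) (hx : x ∈ A) (hπx : 0 < π x) :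
    ∑ y : {y // y ∈ A}, hitKernel K A x y = 1 := by
  have h1 : HasSum (fun t => ∑ y : {y // y ∈ A}, excursion K A t x y)
      (∑ y : {y // y ∈ A}, hitKernel K A x y) :=
    hasSum_sum fun y _ => (excursion_summable K A hK0 hK1 x y y.2).hasSum
  have h2 := h1.tendsto_sum_nat
  have h3 : ∀ T, ∑ t ∈ Finset.range T, ∑ y : {y // y ∈ A}, excursion K A t x y =
      1 - ∑ z, tabooPow K A T x z := by
    intro T
    rw [eq_sub_iff_add_eq, ← excursion_partial_sum K A hK1 T x]
    congr 1
    refine Finset.sum_congr rfl fun t _ => ?_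
    rw [← Finset.sum_filter]
    exact (Finset.sum_subtype _ (by simp) _).symm
  simp_rw [h3] at h2
  have h4 : Filter.Tendsto (fun T => ∑ z, tabooPow K A T x z) Filter.atTop (nhds 0) := by
    have := (tendsto_taboo_zero K A π hπ hK0 hK1 hrev x hx).const_mul (π x)⁻¹
    simpa [← mul_assoc, inv_mul_cancel₀ hπx.ne'] using this
  have h5 := h4.const_sub 1
  rw [sub_zero] at h5
  exact tendsto_nhds_unique h2 h5

/-- The Dirichlet form of the trace is the Dirichlet form of the full chain evaluated at the
harmonic extension. -/
lemma exists_extension_energy (K : S → S → ℝ) (A : Set S) (π : S → ℝ) (hπ : ∀ x, 0 ≤ π x)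
    (hπA : ∀ x ∈ A, 0 < π x)
    (hK0 : ∀ x y, 0 ≤ K x y) (hK1 : ∀ x, ∑ y, K x y = 1)
    (hrev : ∀ x y, π x * K x y = π y * K y x) (f : {x // x ∈ A} → ℝ) :
    ∃ F : S → ℝ, (∀ x : {x // x ∈ A}, F x = f x) ∧
      energy K π F = energy (traceKernel K A) (fun x : {x // x ∈ A} => π x) f := by
  set h : S → ℝ := fun z => ∑ y : {y // y ∈ A}, hitKernel K A z y * f y with hh
  set F : S → ℝ := fun z => if hz : z ∈ A then f ⟨z, hz⟩ else h z with hF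
  have hFA : ∀ x : {x // x ∈ A}, F x = f x := by
    intro x
    simp [hF, x.2]
  refine ⟨F, hFA, ?_⟩
  have hsplit : ∀ φ : S → ℝ, ∑ z, φ z =
      ∑ y : {y // y ∈ A}, φ y + ∑ z, (if z ∈ A then 0 else φ z) := by
    intro φ
    rw [← Finset.sum_subtype (univ.filter fun z => z ∈ A) (by simp) φ, Finset.sum_filter,
      ← Finset.sum_add_distrib]
    refine Finset.sum_congr rfl fun z _ => ?_
    split_ifs <;> simp
  have hKF : ∀ x, applyK K F x = h x := by
    intro x
    rw [applyK, hsplit]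
    have h1 : ∑ y : {y // y ∈ A}, K x y * F y = ∑ y : {y // y ∈ A}, K x y * f y :=
      Finset.sum_congr rfl fun y _ => by rw [hFA]
    rw [h1, hh]
    have h2 : ∀ y : {y // y ∈ A}, hitKernel K A x y * f y =
        K x y * f y + ∑ z, K x z * (if z ∈ A then 0 else hitKernel K A z y) * f y := by
      intro y
      rw [hitKernel_eq K A hK0 hK1 x y y.2, add_mul, Finset.sum_mul]
    simp_rw [h2]
    rw [Finset.sum_add_distrib, Finset.sum_comm]
    congr 1
    refine Finset.sum_congr rfl fun z _ => ?_
    by_cases hz : z ∈ A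
    · simp [hz]
    · simp only [hz, if_false, hF, dif_neg, not_false_eq_true, hh, Finset.mul_sum]
      exact Finset.sum_congr rfl fun y _ => by ring
  have htr : ∀ x : {x // x ∈ A}, applyK (traceKernel K A) f x = h x := fun x => rfl
  rw [energy_eq K π (fun x _ => hK1 x) hrev F,
    energy_eq (traceKernel K A) (fun x : {x // x ∈ A} => π x)
      (fun x _ => hitKernel_row_sum K A π hπ hK0 hK1 hrev x x.2 (hπA x x.2))
      (fun x y => hitKernel_rev K A π hrev x y) f]
  rw [hsplit (fun x => π x * F x ^ 2), hsplit (fun x => π x * F x * applyK K F x)]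
  simp only [hKF, htr, hFA]
  have hcancel : ∑ z, (if z ∈ A then 0 else π z * F z ^ 2) =
      ∑ z, (if z ∈ A then 0 else π z * F z * h z) := by
    refine Finset.sum_congr rfl fun z _ => ?_
    by_cases hz : z ∈ A
    · simp [hz]
    · simp only [hz, if_false, hF, dif_neg, not_false_eq_true]
      ring
  rw [hcancel]
  ring

end Trace

/-! ### A Poincaré inequality on the torus for functions vanishing at a point -/

lemma sum_range_two_mul_half (φ : ℕ → ℝ) (N : ℕ) :
    ∑ a ∈ Finset.range (2 * N), φ (a / 2) = 2 * ∑ a ∈ Finset.range N, φ a := by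
  induction N with
  | zero => simp
  | succ N ih =>
    rw [show 2 * (N + 1) = 2 * N + 1 + 1 by ring, Finset.sum_range_succ, Finset.sum_range_succ,
      ih, Finset.sum_range_succ, show (2 * N) / 2 = N by omega, show (2 * N + 1) / 2 = N by omega]
    ring

lemma sq_sub_le_path (h : ℕ → ℝ) (R a a' : ℕ) (ha : a < R) (ha' : a' ≤ a) :
    (h a - h a') ^ 2 ≤ R * ∑ i ∈ Finset.range R, (h (i + 1) - h i) ^ 2 := by
  have h1 : h a - h a' = ∑ i ∈ Finset.Ico a' a, (h (i + 1) - h i) :=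
    (Finset.sum_Ico_sub h ha').symm
  have h2 : (∑ i ∈ Finset.Ico a' a, (h (i + 1) - h i)) ^ 2 ≤
      (#(Finset.Ico a' a) : ℝ) * ∑ i ∈ Finset.Ico a' a, (h (i + 1) - h i) ^ 2 :=
    sq_sum_le_card_mul_sum_sq
  have h3 : ∑ i ∈ Finset.Ico a' a, (h (i + 1) - h i) ^ 2 ≤
      ∑ i ∈ Finset.range R, (h (i + 1) - h i) ^ 2 := by
    refine Finset.sum_le_sum_of_subset_of_nonneg ?_ fun _ _ _ => sq_nonneg _
    intro i hi
    simp only [Finset.mem_Ico, Finset.mem_range] at *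
    omega
  rw [h1]
  refine h2.trans (mul_le_mul ?_ h3 (Finset.sum_nonneg fun _ _ => sq_nonneg _) (by positivity))
  rw [Nat.card_Ico]
  exact_mod_cast (show a - a' ≤ R by omega)

/-- The Dirichlet energy of `g` on the box `[0, N]²` (nearest-neighbour edges with lower-left
endpoint in `[0, N)²`). -/
def boxEnergy (g : ℕ → ℕ → ℝ) (N : ℕ) : ℝ :=
  ∑ a ∈ Finset.range N, ∑ b ∈ Finset.range N,
    ((g (a + 1) b - g a b) ^ 2 + (g a (b + 1) - g a b) ^ 2)

lemma boxEnergy_mono (g : ℕ → ℕ → ℝ) {M N : ℕ} (h : M ≤ N) : boxEnergy g M ≤ boxEnergy g N := by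
  have hs : Finset.range M ⊆ Finset.range N := Finset.range_mono h
  calc boxEnergy g M ≤ ∑ a ∈ Finset.range M, ∑ b ∈ Finset.range N,
      ((g (a + 1) b - g a b) ^ 2 + (g a (b + 1) - g a b) ^ 2) :=
        Finset.sum_le_sum fun a _ =>
          Finset.sum_le_sum_of_subset_of_nonneg hs fun _ _ _ => by positivity
    _ ≤ _ := Finset.sum_le_sum_of_subset_of_nonneg hs
        fun _ _ _ => Finset.sum_nonneg fun _ _ => by positivity

/-- Comparing `g` at `(a, b)` and at `(a/2, b/2)` along L-shaped paths. -/
lemma sum_sq_halving_le (g : ℕ → ℕ → ℝ) (N : ℕ) :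
    ∑ a ∈ Finset.range (2 * N), ∑ b ∈ Finset.range (2 * N), (g a b - g (a / 2) (b / 2)) ^ 2
      ≤ 16 * (N : ℝ) ^ 2 * boxEnergy g (2 * N) := by
  set Eh : ℝ := ∑ b ∈ Finset.range (2 * N), ∑ i ∈ Finset.range (2 * N),
    (g (i + 1) b - g i b) ^ 2 with hEh
  set Ev : ℕ → ℝ := fun a => ∑ i ∈ Finset.range (2 * N), (g a (i + 1) - g a i) ^ 2 with hEv
  have hE : boxEnergy g (2 * N) = Eh + ∑ a ∈ Finset.range (2 * N), Ev a := by
    simp only [boxEnergy, hEh, hEv, Finset.sum_add_distrib]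
    congr 1
    rw [Finset.sum_comm]
  have h1 : ∑ a ∈ Finset.range (2 * N), ∑ b ∈ Finset.range (2 * N), (g a b - g (a / 2) b) ^ 2
      ≤ 4 * (N : ℝ) ^ 2 * Eh := by
    calc _ ≤ ∑ a ∈ Finset.range (2 * N), ∑ b ∈ Finset.range (2 * N),
          ((2 * N : ℕ) : ℝ) * ∑ i ∈ Finset.range (2 * N), (g (i + 1) b - g i b) ^ 2 := by
          refine Finset.sum_le_sum fun a ha => Finset.sum_le_sum fun b _ => ?_
          exact sq_sub_le_path (fun i => g i b) (2 * N) a (a / 2) (Finset.mem_range.1 ha)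
            (Nat.div_le_self _ _)
      _ = _ := by
          simp only [← Finset.mul_sum, ← hEh, Finset.sum_const, Finset.card_range, nsmul_eq_mul]
          push_cast
          ring
  have h2 : ∑ a ∈ Finset.range (2 * N), ∑ b ∈ Finset.range (2 * N),
      (g (a / 2) b - g (a / 2) (b / 2)) ^ 2 ≤ 8 * (N : ℝ) ^ 2 * ∑ a ∈ Finset.range (2 * N), Ev a := by
    calc _ ≤ ∑ a ∈ Finset.range (2 * N), ∑ b ∈ Finset.range (2 * N),
          ((2 * N : ℕ) : ℝ) * Ev (a / 2) := by
          refine Finset.sum_le_sum fun a ha => Finset.sum_le_sum fun b hb => ?_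
          exact sq_sub_le_path (fun i => g (a / 2) i) (2 * N) b (b / 2) (Finset.mem_range.1 hb)
            (Nat.div_le_self _ _)
      _ = 8 * (N : ℝ) ^ 2 * ∑ a ∈ Finset.range N, Ev a := by
          simp only [Finset.sum_const, Finset.card_range, nsmul_eq_mul, ← Finset.mul_sum]
          rw [sum_range_two_mul_half]
          push_cast
          ring
      _ ≤ _ := by
          refine mul_le_mul_of_nonneg_left ?_ (by positivity)
          refine Finset.sum_le_sum_of_subset_of_nonneg (Finset.range_mono (by omega))
            fun _ _ _ => Finset.sum_nonneg fun _ _ => sq_nonneg _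
  have h3 : ∑ a ∈ Finset.range (2 * N), ∑ b ∈ Finset.range (2 * N),
      (g a b - g (a / 2) (b / 2)) ^ 2 ≤
      2 * ∑ a ∈ Finset.range (2 * N), ∑ b ∈ Finset.range (2 * N), (g a b - g (a / 2) b) ^ 2 +
      2 * ∑ a ∈ Finset.range (2 * N), ∑ b ∈ Finset.range (2 * N),
        (g (a / 2) b - g (a / 2) (b / 2)) ^ 2 := by
    simp only [Finset.mul_sum, ← Finset.sum_add_distrib]
    refine Finset.sum_le_sum fun a ha => Finset.sum_le_sum fun b hb => ?_
    nlinarith [sq_nonneg ((g a b - g (a / 2) b) - (g (a / 2) b - g (a / 2) (b / 2)))]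
  have hEh0 : 0 ≤ Eh := Finset.sum_nonneg fun _ _ => Finset.sum_nonneg fun _ _ => sq_nonneg _
  rw [hE]
  nlinarith [mul_nonneg (sq_nonneg (N : ℝ)) hEh0]

/-- On the `2^j × 2^j` box, a function vanishing at the corner satisfies a Poincaré inequality with
constant of order `4^j j²`, the volume up to a logarithmic factor: telescope along
`v ↦ v/2 ↦ v/4 ↦ ⋯ ↦ 0`. -/
lemma box_poincare (g : ℕ → ℕ → ℝ) (h0 : g 0 0 = 0) (m : ℕ) (E : ℝ)
    (hE : boxEnergy g (2 ^ m) ≤ E) (j : ℕ) (hj : j ≤ m) :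
    ∑ a ∈ Finset.range (2 ^ j), ∑ b ∈ Finset.range (2 ^ j), g a b ^ 2
      ≤ 4 * (j : ℝ) ^ 2 * 4 ^ j * E := by
  induction j with
  | zero => simp [h0]
  | succ j ih =>
    have ih := ih (by omega)
    have hD := sum_sq_halving_le g (2 ^ j)
    rw [← pow_succ'] at hD
    have hE' : boxEnergy g (2 ^ (j + 1)) ≤ E :=
      (boxEnergy_mono g (Nat.pow_le_pow_right (by norm_num) hj)).trans hE
    have hD' : ∑ a ∈ Finset.range (2 ^ (j + 1)), ∑ b ∈ Finset.range (2 ^ (j + 1)),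
        (g a b - g (a / 2) (b / 2)) ^ 2 ≤ 16 * 4 ^ j * E := by
      refine hD.trans ?_
      have : (((2 ^ j : ℕ) : ℝ)) ^ 2 = 4 ^ j := by
        push_cast
        rw [← pow_mul, mul_comm, pow_mul]
        norm_num
      rw [this]
      exact mul_le_mul_of_nonneg_left hE' (by positivity)
    have hhalf : ∑ a ∈ Finset.range (2 ^ (j + 1)), ∑ b ∈ Finset.range (2 ^ (j + 1)),
        g (a / 2) (b / 2) ^ 2 =
        4 * ∑ a ∈ Finset.range (2 ^ j), ∑ b ∈ Finset.range (2 ^ j), g a b ^ 2 := by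
      rw [pow_succ']
      have hb : ∀ a, ∑ b ∈ Finset.range (2 * 2 ^ j), g (a / 2) (b / 2) ^ 2 =
          2 * ∑ b ∈ Finset.range (2 ^ j), g (a / 2) b ^ 2 :=
        fun a => sum_range_two_mul_half (fun b => g (a / 2) b ^ 2) _
      simp_rw [hb]
      rw [← Finset.mul_sum,
        sum_range_two_mul_half (fun a => ∑ b ∈ Finset.range (2 ^ j), g a b ^ 2)]
      ring
    -- `j (α + β)² ≤ (j + 1) α² + j (j + 1) β²`, with `α = g (v/2)`, `β = g v - g (v/2)`
    have hpt : (j : ℝ) * ∑ a ∈ Finset.range (2 ^ (j + 1)), ∑ b ∈ Finset.range (2 ^ (j + 1)),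
        g a b ^ 2 ≤
        (j + 1) * ∑ a ∈ Finset.range (2 ^ (j + 1)), ∑ b ∈ Finset.range (2 ^ (j + 1)),
          g (a / 2) (b / 2) ^ 2 +
        j * (j + 1) * ∑ a ∈ Finset.range (2 ^ (j + 1)), ∑ b ∈ Finset.range (2 ^ (j + 1)),
          (g a b - g (a / 2) (b / 2)) ^ 2 := by
      simp only [Finset.mul_sum, ← Finset.sum_add_distrib]
      refine Finset.sum_le_sum fun a ha => Finset.sum_le_sum fun b hb => ?_
      nlinarith [sq_nonneg (g (a / 2) (b / 2) - j * (g a b - g (a / 2) (b / 2)))]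
    rcases Nat.eq_zero_or_pos j with hj0 | hj0
    · subst hj0
      have : ∑ a ∈ Finset.range (2 ^ (0 + 1)), ∑ b ∈ Finset.range (2 ^ (0 + 1)), g a b ^ 2 =
          ∑ a ∈ Finset.range (2 ^ (0 + 1)), ∑ b ∈ Finset.range (2 ^ (0 + 1)),
          (g a b - g (a / 2) (b / 2)) ^ 2 := by
        refine Finset.sum_congr rfl fun a ha => Finset.sum_congr rfl fun b hb => ?_
        have ha' : a / 2 = 0 := by have := Finset.mem_range.1 ha; omega
        have hb' : b / 2 = 0 := by have := Finset.mem_range.1 hb; omega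
        rw [ha', hb', h0, sub_zero]
      rw [this]
      refine hD'.trans (le_of_eq ?_)
      norm_num
    · have hjr : (0 : ℝ) < j := by exact_mod_cast hj0
      rw [hhalf] at hpt
      refine le_of_mul_le_mul_left (hpt.trans ?_) hjr
      have h1 := mul_le_mul_of_nonneg_left ih (show (0 : ℝ) ≤ (j + 1) * 4 by positivity)
      have h2 := mul_le_mul_of_nonneg_left hD' (show (0 : ℝ) ≤ j * (j + 1) by positivity)
      push_cast
      rw [pow_succ (4 : ℝ)]
      linarith

lemma sum_range_zmod (L : ℕ) [NeZero L] (φ : ZMod L → ℝ) :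
    ∑ a ∈ Finset.range L, φ (a : ZMod L) = ∑ z, φ z := by
  refine Finset.sum_bij (fun a _ => (a : ZMod L)) (fun _ _ => Finset.mem_univ _) ?_ ?_
    (fun _ _ => rfl)
  · intro a ha b hb hab
    have := congrArg ZMod.val hab
    rwa [ZMod.val_cast_of_lt (Finset.mem_range.1 ha),
      ZMod.val_cast_of_lt (Finset.mem_range.1 hb)] at this
  · intro z _
    exact ⟨z.val, Finset.mem_range.2 (ZMod.val_lt z), ZMod.natCast_zmod_val z⟩

lemma sum_range_two_mul_zmod (L : ℕ) [NeZero L] (φ : ZMod L → ℝ) :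
    ∑ a ∈ Finset.range (2 * L), φ (a : ZMod L) = 2 * ∑ z, φ z := by
  rw [two_mul, Finset.sum_range_add]
  have : ∀ x : ℕ, ((L + x : ℕ) : ZMod L) = x := by intro x; simp
  simp only [this, sum_range_zmod]
  ring

/-- Dirichlet energy of a function on the torus, with one term for each site and each of the two
positive coordinate directions. -/
def torusEnergy {L : ℕ} [NeZero L] (g : Vertex L → ℝ) : ℝ :=
  ∑ w : Vertex L, ((g (w + (1, 0)) - g w) ^ 2 + (g (w + (0, 1)) - g w) ^ 2)

/-- Poincaré inequality, with constant of order `n (log n)²`, for a function on the torus vanishing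
at the site `u`. The torus is unrolled to a box with corner `u` whose side `2^m` lies between `L`
and `2 L`, so that every site is covered and no energy term is used more than four times. -/
lemma torus_poincare {L : ℕ} [NeZero L] (hL : 2 ≤ L) (g : Vertex L → ℝ) (u : Vertex L)
    (hu : g u = 0) :
    ∑ w, g w ^ 2 ≤ 256 * Real.log ((L : ℝ) ^ 2) ^ 2 * (L : ℝ) ^ 2 * torusEnergy g := by
  set m := Nat.clog 2 L with hm
  have hm1 : L ≤ 2 ^ m := Nat.le_pow_clog (by norm_num) L
  have hm2 : 2 ^ m ≤ 2 * L := by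
    have h1 := Nat.pow_pred_clog_lt_self (b := 2) (by norm_num) (show 1 < L by omega)
    have hpos : 0 < m := Nat.clog_pos (by norm_num) hL
    have h2 : 2 ^ m = 2 * 2 ^ (m - 1) := by
      rw [← pow_succ']; congr 1; omega
    have h3 : 2 ^ (m - 1) < L := h1
    omega
  set g' : ℕ → ℕ → ℝ := fun a b => g (u + ((a : ZMod L), (b : ZMod L))) with hg'
  have h0 : g' 0 0 = 0 := by
    simp only [hg', Nat.cast_zero]
    rw [show ((0 : ZMod L), (0 : ZMod L)) = 0 from rfl, add_zero, hu]
  have hEn : boxEnergy g' (2 ^ m) ≤ 4 * torusEnergy g := by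
    refine (boxEnergy_mono g' hm2).trans (le_of_eq ?_)
    have h1 : ∀ a b : ℕ, g' (a + 1) b = g (u + ((a : ZMod L), (b : ZMod L)) + (1, 0)) := by
      intro a b
      simp only [hg', Nat.cast_add, Nat.cast_one, add_assoc, Prod.mk_add_mk, add_zero]
    have h2 : ∀ a b : ℕ, g' a (b + 1) = g (u + ((a : ZMod L), (b : ZMod L)) + (0, 1)) := by
      intro a b
      simp only [hg', Nat.cast_add, Nat.cast_one, add_assoc, Prod.mk_add_mk, add_zero]
    simp only [boxEnergy, h1, h2]
    set ψ : Vertex L → ℝ := fun w => (g (w + (1, 0)) - g w) ^ 2 + (g (w + (0, 1)) - g w) ^ 2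
      with hψ
    calc ∑ a ∈ Finset.range (2 * L), ∑ b ∈ Finset.range (2 * L), ψ (u + ((a : ZMod L), (b : ZMod L)))
        = ∑ a ∈ Finset.range (2 * L), 2 * ∑ z : ZMod L, ψ (u + ((a : ZMod L), z)) :=
          Finset.sum_congr rfl fun a _ =>
            sum_range_two_mul_zmod L (fun z => ψ (u + ((a : ZMod L), z)))
      _ = 4 * ∑ y : ZMod L, ∑ z : ZMod L, ψ (u + (y, z)) := by
          rw [← Finset.mul_sum,
            sum_range_two_mul_zmod L (fun y => ∑ z : ZMod L, ψ (u + (y, z)))]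
          ring
      _ = 4 * ∑ w : Vertex L, ψ (u + w) := by rw [Fintype.sum_prod_type]
      _ = 4 * torusEnergy g := by
          rw [torusEnergy, Equiv.sum_comp (Equiv.addLeft u) ψ |>.symm]
          rfl
  have hS := box_poincare g' h0 m _ hEn m le_rfl
  have hlow : ∑ w, g w ^ 2 ≤
      ∑ a ∈ Finset.range (2 ^ m), ∑ b ∈ Finset.range (2 ^ m), g' a b ^ 2 := by
    calc ∑ w, g w ^ 2 = ∑ w : Vertex L, g (u + w) ^ 2 :=
          (Equiv.sum_comp (Equiv.addLeft u) (fun w => g w ^ 2)).symm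
      _ = ∑ a ∈ Finset.range L, ∑ b ∈ Finset.range L, g' a b ^ 2 := by
          rw [Fintype.sum_prod_type, ← sum_range_zmod]
          refine Finset.sum_congr rfl fun a _ => ?_
          rw [← sum_range_zmod]
      _ ≤ ∑ a ∈ Finset.range L, ∑ b ∈ Finset.range (2 ^ m), g' a b ^ 2 :=
          Finset.sum_le_sum fun a _ => Finset.sum_le_sum_of_subset_of_nonneg
            (Finset.range_mono hm1) fun _ _ _ => sq_nonneg _
      _ ≤ _ := Finset.sum_le_sum_of_subset_of_nonneg (Finset.range_mono hm1)
            fun _ _ _ => Finset.sum_nonneg fun _ _ => sq_nonneg _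
  have hT0 : 0 ≤ torusEnergy g := Finset.sum_nonneg fun _ _ => by positivity
  have hLr : (2 : ℝ) ≤ L := by exact_mod_cast hL
  have h4m : (4 : ℝ) ^ m ≤ 4 * (L : ℝ) ^ 2 := by
    have h1 : ((2 : ℝ) ^ m) ≤ 2 * L := by exact_mod_cast hm2
    calc (4 : ℝ) ^ m = (2 ^ m) ^ 2 := by rw [← pow_mul, mul_comm, pow_mul]; norm_num
      _ ≤ (2 * L) ^ 2 := pow_le_pow_left₀ (by positivity) h1 2
      _ = _ := by ring
  have hmlog : (m : ℝ) ≤ 2 * Real.log ((L : ℝ) ^ 2) := by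
    have h1 : ((2 : ℝ) ^ m) ≤ 2 * L := by exact_mod_cast hm2
    have h2 := Real.log_le_log (by positivity) h1
    rw [Real.log_pow, Real.log_mul (by norm_num) (by positivity)] at h2
    have h3 := Real.log_two_gt_d9
    have h4 : Real.log 2 ≤ Real.log L := Real.log_le_log (by norm_num) hLr
    rw [Real.log_pow]
    push_cast
    nlinarith
  calc ∑ w, g w ^ 2 ≤ 4 * (m : ℝ) ^ 2 * 4 ^ m * (4 * torusEnergy g) := hlow.trans hS
    _ ≤ 4 * (2 * Real.log ((L : ℝ) ^ 2)) ^ 2 * (4 * (L : ℝ) ^ 2) * (4 * torusEnergy g) := by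
        gcongr
    _ = _ := by ring

/-! ### Elementary properties of the KCIP -/

section Kernel

variable {L : ℕ}

lemma adj_symm {u v : Vertex L} (h : adj u v) : adj v u := by
  rcases h with h | h | h | h
  · exact Or.inr (Or.inr (Or.inl h))
  · exact Or.inr (Or.inr (Or.inr h))
  · exact Or.inl h
  · exact Or.inr (Or.inl h)

lemma adj_ne (hL : 2 ≤ L) {u v : Vertex L} (h : adj u v) : u ≠ v := by
  have : Fact (1 < L) := ⟨hL⟩
  rintro rfl
  simp [adj, Prod.ext_iff] at h

lemma adj_add_right (w : Vertex L) : adj (w + (1, 0)) w := Or.inl (by simp)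

lemma adj_add_up (w : Vertex L) : adj (w + (0, 1)) w := Or.inr (Or.inl (by simp))

variable [NeZero L]

lemma card_vertex : (Fintype.card (Vertex L) : ℝ) = (L : ℝ) ^ 2 := by
  simp [Fintype.card_prod, ZMod.card, sq]

lemma numParticles_le (x : Config L) : numParticles x ≤ L ^ 2 := by
  have h := Finset.card_le_univ (univ.filter fun v => x v = true)
  have h2 : Fintype.card (Vertex L) = L ^ 2 := by simp [Fintype.card_prod, ZMod.card, sq]
  rw [h2] at h
  exact h

/-- The configuration `x` with a particle added at `v`. -/
def addP (x : Config L) (v : Vertex L) : Config L := Function.update x v true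

lemma numParticles_addP (x : Config L) (v : Vertex L) (hv : x v = false) :
    numParticles (addP x v) = numParticles x + 1 := by
  have : (univ.filter fun u => addP x v u = true) = insert v (univ.filter fun u => x u = true) := by
    ext u
    rw [Finset.mem_filter, Finset.mem_insert, Finset.mem_filter]
    by_cases h : u = v
    · subst h; simp [addP]
    · simp [addP, h]
  rw [numParticles, this, Finset.card_insert_of_notMem (by simp [hv])]
  rfl

lemma numParticles_pos_iff (x : Config L) : 0 < numParticles x ↔ ∃ v, x v = true := by
  rw [numParticles, Finset.card_pos]
  constructor
  · rintro ⟨v, hv⟩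
    exact ⟨v, by simpa using hv⟩
  · rintro ⟨v, hv⟩
    exact ⟨v, by simpa using hv⟩

lemma hasOccNbr_update (hL : 2 ≤ L) (x : Config L) (v : Vertex L) (b : Bool) :
    hasOccNbr (Function.update x v b) v ↔ hasOccNbr x v := by
  constructor
  · rintro ⟨u, hu, h⟩
    exact ⟨u, hu, by rwa [Function.update_of_ne (adj_ne hL hu)] at h⟩
  · rintro ⟨u, hu, h⟩
    exact ⟨u, hu, by rwa [Function.update_of_ne (adj_ne hL hu)]⟩

lemma kcip_norm_pos (p : ℝ) (hp0 : 0 < p) (hp1 : p < 1) : 0 < 1 - (1 - p) ^ (L ^ 2) := by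
  have : (1 - p) ^ (L ^ 2) < 1 :=
    pow_lt_one₀ (by linarith) (by linarith) (pow_ne_zero _ (NeZero.ne L))
  linarith

lemma stationary_nonneg (p : ℝ) (hp0 : 0 < p) (hp1 : p < 1) (x : Config L) :
    0 ≤ kcipStationary L p x := by
  rw [kcipStationary]
  split_ifs
  · have := kcip_norm_pos (L := L) p hp0 hp1
    have h2 : 0 < 1 - p := by linarith
    positivity
  · exact le_rfl

lemma stationary_pos (p : ℝ) (hp0 : 0 < p) (hp1 : p < 1) (x : Config L)
    (hx : 0 < numParticles x) : 0 < kcipStationary L p x := by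
  rw [kcipStationary, if_pos hx]
  have := kcip_norm_pos (L := L) p hp0 hp1
  have h2 : 0 < 1 - p := by linarith
  positivity

lemma stationary_addP (p : ℝ) (x : Config L) (hx : 0 < numParticles x) (v : Vertex L)
    (hv : x v = false) :
    kcipStationary L p (addP x v) * (1 - p) = kcipStationary L p x * p := by
  have h1 := numParticles_addP x v hv
  have h2 := numParticles_le (addP x v)
  rw [kcipStationary, kcipStationary, if_pos hx, if_pos (by omega), h1]
  have h3 : L ^ 2 - numParticles x = L ^ 2 - (numParticles x + 1) + 1 := by omega
  rw [h3, pow_succ, pow_succ]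
  ring

/-- `π(x ∪ {v}) ≥ λ π(x)` with `λ = p / (1 - p)`; equality unless `x` is empty. -/
lemma stationary_le_addP (p : ℝ) (hp0 : 0 < p) (hp1 : p < 1) (x : Config L) (v : Vertex L)
    (hv : x v = false) :
    p / (1 - p) * kcipStationary L p x ≤ kcipStationary L p (addP x v) := by
  rcases Nat.eq_zero_or_pos (numParticles x) with h | h
  · have : kcipStationary L p x = 0 := by simp [kcipStationary, h]
    rw [this, mul_zero]
    exact stationary_nonneg p hp0 hp1 _
  · have := stationary_addP p x h v hv
    have h1 : (0 : ℝ) < 1 - p := by linarith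
    rw [div_mul_eq_mul_div, div_le_iff₀ h1, this, mul_comm]

lemma sum_kcipKernel (p : ℝ) (x : Config L) (φ : Config L → ℝ) :
    ∑ y, kcipKernel L p x y * φ y = (1 / (L : ℝ) ^ 2) * ∑ v : Vertex L,
      if hasOccNbr x v then p * φ (addP x v) + (1 - p) * φ (Function.update x v false)
      else φ x := by
  simp only [kcipKernel, mul_assoc, ← Finset.mul_sum]
  congr 1
  simp only [Finset.sum_mul]
  rw [Finset.sum_comm]
  refine Finset.sum_congr rfl fun v _ => ?_
  split_ifs
  · simp [add_mul, Finset.sum_add_distrib, addP]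
  · simp

lemma kcipKernel_row_sum (p : ℝ) (x : Config L) : ∑ y, kcipKernel L p x y = 1 := by
  have h := sum_kcipKernel p x (fun _ => 1)
  simp only [mul_one] at h
  rw [h]
  have : ∀ v : Vertex L, (if hasOccNbr x v then p + (1 - p) else 1) = 1 := by
    intro v; split_ifs <;> ring
  simp only [this, Finset.sum_const, Finset.card_univ, nsmul_eq_mul, mul_one, card_vertex]
  have : (L : ℝ) ≠ 0 := Nat.cast_ne_zero.2 (NeZero.ne L)
  field_simp

lemma kcip_term_nonneg (p : ℝ) (hp0 : 0 < p) (hp1 : p < 1) (x y : Config L) (v : Vertex L) :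
    (0 : ℝ) ≤ if hasOccNbr x v then
      p * (if y = Function.update x v true then 1 else 0)
        + (1 - p) * (if y = Function.update x v false then 1 else 0)
    else (if y = x then 1 else 0) := by
  have h2 : 0 < 1 - p := by linarith
  split_ifs <;> simp <;> linarith

lemma kcipKernel_nonneg (p : ℝ) (hp0 : 0 < p) (hp1 : p < 1) (x y : Config L) :
    0 ≤ kcipKernel L p x y := by
  rw [kcipKernel]
  exact mul_nonneg (by positivity)
    (Finset.sum_nonneg fun v _ => kcip_term_nonneg p hp0 hp1 x y v)

/-- Detailed balance for the update of a single site. -/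
lemma kcip_rev_term (hL : 2 ≤ L) (p : ℝ) (x y : Config L) (v : Vertex L) :
    kcipStationary L p x * (if hasOccNbr x v then
      p * (if y = Function.update x v true then 1 else 0)
        + (1 - p) * (if y = Function.update x v false then 1 else 0)
    else (if y = x then 1 else 0)) =
    kcipStationary L p y * (if hasOccNbr y v then
      p * (if x = Function.update y v true then 1 else 0)
        + (1 - p) * (if x = Function.update y v false then 1 else 0)
    else (if x = y then 1 else 0)) := by
  -- a flip at `v` between `a` and `a ∪ {v}`
  have key : ∀ a : Config L, a v = false → hasOccNbr a v →
      kcipStationary L p (addP a v) * (1 - p) = kcipStationary L p a * p := by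
    rintro a ha ⟨u, -, hu⟩
    exact stationary_addP p a ((numParticles_pos_iff a).2 ⟨u, hu⟩) v ha
  by_cases hxy : y = Function.update x v (y v)
  · have hyx : x = Function.update y v (x v) := by rw [hxy]; simp
    have hocc : hasOccNbr y v ↔ hasOccNbr x v := by rw [hxy]; exact hasOccNbr_update hL x v _
    by_cases ho : hasOccNbr x v
    · rw [if_pos ho, if_pos (hocc.2 ho)]
      rcases hx : x v with _ | _ <;> rcases hy : y v with _ | _
      · rw [hy] at hxy; rw [hx] at hyx
        have : y = x := by rw [hxy, ← hx]; simp
        subst this; rfl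
      · rw [hy] at hxy; rw [hx] at hyx
        have h1 : ¬ y = Function.update x v false := by
          intro h; rw [h] at hy; simp at hy
        have h2 : ¬ x = Function.update y v true := by
          intro h; rw [h] at hx; simp at hx
        rw [if_pos hxy, if_neg h1, if_neg h2, if_pos hyx]
        have hk := key x hx ho
        have : addP x v = y := hxy.symm
        rw [this] at hk
        linarith
      · rw [hy] at hxy; rw [hx] at hyx
        have h1 : ¬ y = Function.update x v true := by
          intro h; rw [h] at hy; simp at hy
        have h2 : ¬ x = Function.update y v false := by
          intro h; rw [h] at hx; simp at hx
        rw [if_neg h1, if_pos hxy, if_pos hyx, if_neg h2]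
        have hk := key y hy (hocc.2 ho)
        have : addP y v = x := hyx.symm
        rw [this] at hk
        linarith
      · rw [hy] at hxy; rw [hx] at hyx
        have : y = x := by rw [hxy, ← hx]; simp
        subst this; rfl
    · rw [if_neg ho, if_neg (fun h => ho (hocc.1 h))]
      by_cases h : y = x
      · subst h; rfl
      · rw [if_neg h, if_neg (fun h' => h h'.symm)]; ring
  · have h1 : ∀ b, ¬ y = Function.update x v b := by
      intro b h
      exact hxy (by rw [h]; simp)
    have h2 : ∀ b, ¬ x = Function.update y v b := by
      intro b h
      exact hxy (by rw [h]; simp)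
    have h3 : ¬ y = x := by
      rintro rfl
      exact hxy (by simp)
    have h4 : ¬ x = y := fun h => h3 h.symm
    simp [h1, h2, h3, h4]

lemma kcipKernel_rev (hL : 2 ≤ L) (p : ℝ) (x y : Config L) :
    kcipStationary L p x * kcipKernel L p x y = kcipStationary L p y * kcipKernel L p y x := by
  rw [kcipKernel, kcipKernel, mul_left_comm, mul_left_comm (kcipStationary L p y)]
  congr 1
  rw [Finset.mul_sum, Finset.mul_sum]
  exact Finset.sum_congr rfl fun v _ => kcip_rev_term hL p x y v

lemma card_hasOccNbr_le (x : Config L) :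
    #(univ.filter fun v => hasOccNbr x v) ≤ 4 * numParticles x := by
  set P := univ.filter fun v => x v = true with hP
  have hsub : (univ.filter fun v => hasOccNbr x v) ⊆
      (P.image (fun u => u - (1, 0)) ∪ P.image (fun u => u - (0, 1))) ∪
      (P.image (fun u => u + (1, 0)) ∪ P.image (fun u => u + (0, 1))) := by
    intro v hv
    obtain ⟨u, hu, hxu⟩ := (Finset.mem_filter.1 hv).2
    have huP : u ∈ P := by simp [hP, hxu]
    simp only [Finset.mem_union, Finset.mem_image]
    rcases hu with h | h | h | h
    · exact Or.inl (Or.inl ⟨u, huP, by rw [← h]; abel⟩)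
    · exact Or.inl (Or.inr ⟨u, huP, by rw [← h]; abel⟩)
    · exact Or.inr (Or.inl ⟨u, huP, by rw [← h]; abel⟩)
    · exact Or.inr (Or.inr ⟨u, huP, by rw [← h]; abel⟩)
  have hc : numParticles x = #P := rfl
  refine (Finset.card_le_card hsub).trans ?_
  refine (Finset.card_union_le _ _).trans ?_
  have h1 := Finset.card_union_le (P.image (fun u => u - (1, 0))) (P.image (fun u => u - (0, 1)))
  have h2 := Finset.card_union_le (P.image (fun u => u + (1, 0))) (P.image (fun u => u + (0, 1)))
  have i1 := Finset.card_image_le (s := P) (f := fun u => u - (1, 0))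
  have i2 := Finset.card_image_le (s := P) (f := fun u => u - (0, 1))
  have i3 := Finset.card_image_le (s := P) (f := fun u => u + (1, 0))
  have i4 := Finset.card_image_le (s := P) (f := fun u => u + (0, 1))
  omega

lemma kcipKernel_diag (p : ℝ) (hp0 : 0 < p) (hp1 : p < 1) (x : Config L) :
    1 - 4 * (numParticles x : ℝ) / (L : ℝ) ^ 2 ≤ kcipKernel L p x x := by
  have hL : (0 : ℝ) < L := Nat.cast_pos.2 (Nat.pos_of_ne_zero (NeZero.ne L))
  have h1 : ((L : ℝ) ^ 2 - 4 * numParticles x) ≤ ∑ v : Vertex L, if hasOccNbr x v then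
      p * (if x = Function.update x v true then 1 else 0)
        + (1 - p) * (if x = Function.update x v false then 1 else 0)
      else (if x = x then (1 : ℝ) else 0) := by
    have h2 : ∑ v : Vertex L, (1 - (if hasOccNbr x v then (1 : ℝ) else 0)) ≤
      ∑ v : Vertex L, if hasOccNbr x v then
      p * (if x = Function.update x v true then 1 else 0)
        + (1 - p) * (if x = Function.update x v false then 1 else 0)
      else (if x = x then (1 : ℝ) else 0) := by
      refine Finset.sum_le_sum fun v _ => ?_
      have := kcip_term_nonneg p hp0 hp1 x x v
      by_cases ho : hasOccNbr x v
      · rw [if_pos ho] at this ⊢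
        rw [if_pos ho]
        linarith
      · simp [ho]
    refine le_trans ?_ h2
    rw [Finset.sum_sub_distrib, Finset.sum_boole]
    simp only [Finset.sum_const, Finset.card_univ, nsmul_eq_mul, mul_one, card_vertex]
    have : (#(univ.filter fun v => hasOccNbr x v) : ℝ) ≤ 4 * numParticles x := by
      exact_mod_cast card_hasOccNbr_le x
    linarith
  rw [kcipKernel]
  refine le_trans (le_of_eq ?_) (mul_le_mul_of_nonneg_left h1 (by positivity))
  field_simp

/-- Squared increment of `F` when a particle is added at `v`, if the constraint allows it. -/
def flipCost (F : Config L → ℝ) (x : Config L) (v : Vertex L) : ℝ :=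
  if hasOccNbr x v then (F x - F (addP x v)) ^ 2 else 0

/-- The part of the Dirichlet form due to additions of particles, without the rate factor. -/
def flipEnergy (p : ℝ) (F : Config L → ℝ) : ℝ :=
  ∑ x, ∑ v, kcipStationary L p x * flipCost F x v

lemma flipCost_nonneg (F : Config L → ℝ) (x : Config L) (v : Vertex L) : 0 ≤ flipCost F x v := by
  rw [flipCost]
  split_ifs <;> positivity

lemma flipEnergy_le (p : ℝ) (hp0 : 0 < p) (hp1 : p < 1) (F : Config L → ℝ) :
    p / (2 * (L : ℝ) ^ 2) * flipEnergy p F ≤ energy (kcipKernel L p) (kcipStationary L p) F := by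
  have h2 : 0 < 1 - p := by linarith
  have hL : (0 : ℝ) < L := Nat.cast_pos.2 (Nat.pos_of_ne_zero (NeZero.ne L))
  rw [energy, flipEnergy, Finset.mul_sum, Finset.mul_sum]
  refine Finset.sum_le_sum fun x _ => ?_
  have h1 : ∑ y, kcipStationary L p x * kcipKernel L p x y * (F x - F y) ^ 2 =
      kcipStationary L p x * ∑ y, kcipKernel L p x y * (F x - F y) ^ 2 := by
    rw [Finset.mul_sum]
    exact Finset.sum_congr rfl fun y _ => by ring
  rw [h1, sum_kcipKernel p x (fun y => (F x - F y) ^ 2), ← Finset.mul_sum]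
  have h3 : p * ∑ v, flipCost F x v ≤ ∑ v : Vertex L, if hasOccNbr x v then
      p * (F x - F (addP x v)) ^ 2 + (1 - p) * (F x - F (Function.update x v false)) ^ 2
      else (F x - F x) ^ 2 := by
    rw [Finset.mul_sum]
    refine Finset.sum_le_sum fun v _ => ?_
    rw [flipCost]
    split_ifs
    · have : 0 ≤ (1 - p) * (F x - F (Function.update x v false)) ^ 2 := by positivity
      linarith
    · simp
  have h4 := stationary_nonneg p hp0 hp1 x
  calc p / (2 * (L : ℝ) ^ 2) * (kcipStationary L p x * ∑ v, flipCost F x v)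
      = 1 / 2 * (kcipStationary L p x * (1 / (L : ℝ) ^ 2 * (p * ∑ v, flipCost F x v))) := by
        field_simp
    _ ≤ _ := by gcongr

end Kernel

/-! ### Adding a particle far from the others -/

section Adding

variable {L : ℕ}

/-- The site `w` is empty and has no occupied neighbour, so that adding a particle at `w` keeps
the particles of `x` pairwise non-adjacent. -/
def avail (x : Config L) (w : Vertex L) : Prop := x w = false ∧ ¬ hasOccNbr x w

/-- Increment of `F` when a particle is added at the available site `w`, extended by zero to the
other sites. Such an addition is not a move of the process. -/
def addInc (F : Config L → ℝ) (x : Config L) (w : Vertex L) : ℝ :=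
  if avail x w then F (addP x w) - F x else 0

/-- Cost of adding a particle at `w'` after one has been added at the empty site `w`. -/
def secondCost (F : Config L → ℝ) (x : Config L) (w w' : Vertex L) : ℝ :=
  if x w = false then flipCost F (addP x w) w' else 0

lemma secondCost_nonneg (F : Config L → ℝ) (x : Config L) (w w' : Vertex L) :
    0 ≤ secondCost F x w w' := by
  have h : 0 ≤ flipCost F (addP x w) w' := by rw [flipCost]; split_ifs <;> positivity
  rw [secondCost]
  split_ifs
  · exact h
  · exact le_rfl

lemma addP_comm (x : Config L) {w w' : Vertex L} (h : w ≠ w') :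
    addP (addP x w) w' = addP (addP x w') w := by
  rw [addP, addP, addP, addP, Function.update_comm h]

lemma secondCost_of_adj (F : Config L → ℝ) (x : Config L) {w w' : Vertex L} (h : adj w w')
    (hw : x w = false) :
    secondCost F x w w' = (F (addP x w) - F (addP (addP x w) w')) ^ 2 := by
  have : hasOccNbr (addP x w) w' := ⟨w, h, by simp [addP]⟩
  rw [secondCost, if_pos hw, flipCost, if_pos this]

/-- The extended increment changes little along an edge of the torus. When both `w` and `w'` are
available, `x ∪ {w}` and `x ∪ {w'}` are joined through `x ∪ {w, w'}` by two legal moves. When only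
`w` is available, `w'` is empty and next to a particle of `x`, and one more legal move leads from
`x ∪ {w'}` to `x`, whose increment is zero; this is what makes the extension by zero work. -/
lemma addInc_edge (hL : 2 ≤ L) (F : Config L → ℝ) (x : Config L) {w w' : Vertex L}
    (h : adj w w') :
    (addInc F x w - addInc F x w') ^ 2 ≤ 3 * (flipCost F x w + flipCost F x w' +
      secondCost F x w w' + secondCost F x w' w) := by
  have hne : w ≠ w' := adj_ne hL h
  have n1 : 0 ≤ flipCost F x w := by rw [flipCost]; split_ifs <;> positivity
  have n2 : 0 ≤ flipCost F x w' := by rw [flipCost]; split_ifs <;> positivity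
  have n3 := secondCost_nonneg F x w w'
  have n4 := secondCost_nonneg F x w' w
  have hcomm := addP_comm x hne
  by_cases ha : avail x w <;> by_cases hb : avail x w'
  · have e1 := secondCost_of_adj F x h ha.1
    have e2 := secondCost_of_adj F x (adj_symm h) hb.1
    rw [← hcomm] at e2
    rw [addInc, addInc, if_pos ha, if_pos hb]
    nlinarith [sq_nonneg ((F (addP x w) - F (addP (addP x w) w')) +
      (F (addP x w') - F (addP (addP x w) w')))]
  · have hw' : x w' = false := by
      by_contra hcon
      exact ha.2 ⟨w', adj_symm h, by simpa using hcon⟩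
    have ho : hasOccNbr x w' := by
      by_contra hcon
      exact hb ⟨hw', hcon⟩
    have e1 := secondCost_of_adj F x h ha.1
    have e2 := secondCost_of_adj F x (adj_symm h) hw'
    have e3 : flipCost F x w' = (F x - F (addP x w')) ^ 2 := by rw [flipCost, if_pos ho]
    rw [← hcomm] at e2
    rw [addInc, addInc, if_pos ha, if_neg hb]
    have : (F (addP x w) - F x - 0) ^ 2 ≤ 3 * ((F x - F (addP x w')) ^ 2 +
        (F (addP x w) - F (addP (addP x w) w')) ^ 2 +
        (F (addP x w') - F (addP (addP x w) w')) ^ 2) := by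
      generalize F x = a, F (addP x w') = b, F (addP x w) = d, F (addP (addP x w) w') = e
      nlinarith [sq_nonneg ((d - e) - (e - b)), sq_nonneg ((d - e) - (b - a)),
        sq_nonneg ((e - b) - (b - a))]
    linarith
  · have hw : x w = false := by
      by_contra hcon
      exact hb.2 ⟨w, h, by simpa using hcon⟩
    have ho : hasOccNbr x w := by
      by_contra hcon
      exact ha ⟨hw, hcon⟩
    have e1 := secondCost_of_adj F x h hw
    have e2 := secondCost_of_adj F x (adj_symm h) hb.1
    have e3 : flipCost F x w = (F x - F (addP x w)) ^ 2 := by rw [flipCost, if_pos ho]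
    rw [← hcomm] at e2
    rw [addInc, addInc, if_neg ha, if_pos hb]
    have : (0 - (F (addP x w') - F x)) ^ 2 ≤ 3 * ((F x - F (addP x w)) ^ 2 +
        (F (addP x w) - F (addP (addP x w) w')) ^ 2 +
        (F (addP x w') - F (addP (addP x w) w')) ^ 2) := by
      generalize F x = a, F (addP x w') = d, F (addP x w) = b, F (addP (addP x w) w') = e
      nlinarith [sq_nonneg ((d - e) - (e - b)), sq_nonneg ((d - e) - (b - a)),
        sq_nonneg ((e - b) - (b - a))]
    linarith
  · rw [addInc, addInc, if_neg ha, if_neg hb]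
    linarith

lemma addP_injOn (w : Vertex L) {x y : Config L} (hx : x w = false) (hy : y w = false)
    (h : addP x w = addP y w) : x = y := by
  have hx' : Function.update (addP x w) w false = x := by rw [addP]; simp [← hx]
  have hy' : Function.update (addP y w) w false = y := by rw [addP]; simp [← hy]
  rw [← hx', ← hy', h]

variable [NeZero L]

lemma sum_addP_le (φ : Config L → Vertex L → ℝ) (hφ : ∀ z w, 0 ≤ φ z w) :
    ∑ x, ∑ w, (if x w = false then φ (addP x w) w else 0) ≤ ∑ z, ∑ w, φ z w := by
  rw [Finset.sum_comm, Finset.sum_comm (f := φ)]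
  refine Finset.sum_le_sum fun w _ => ?_
  rw [← Finset.sum_filter]
  have h := Finset.sum_image (f := fun z => φ z w) (g := fun x : Config L => addP x w)
    (s := univ.filter fun x : Config L => x w = false) (by
      intro x hx y hy h
      have hx2 := (Finset.mem_filter.1 (Finset.mem_coe.1 hx)).2
      have hy2 := (Finset.mem_filter.1 (Finset.mem_coe.1 hy)).2
      exact addP_injOn w hx2 hy2 h)
  rw [← h]
  exact Finset.sum_le_sum_of_subset_of_nonneg (Finset.subset_univ _) fun z _ _ => hφ z w

/-- For each site `w` the map `x ↦ x ∪ {w}` is injective on configurations with `w` empty, so the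
flips at `σ w` in the configurations `x ∪ {w}` carry no more than the full energy. -/
lemma sum_second_le (p : ℝ) (hp0 : 0 < p) (hp1 : p < 1) (F : Config L → ℝ)
    (σ : Equiv.Perm (Vertex L)) :
    ∑ x, ∑ w, (if x w = false then
      kcipStationary L p (addP x w) * flipCost F (addP x w) (σ w) else 0) ≤ flipEnergy p F := by
  refine (sum_addP_le (fun z w => kcipStationary L p z * flipCost F z (σ w)) fun z w =>
    mul_nonneg (stationary_nonneg p hp0 hp1 z) (flipCost_nonneg F z _)).trans (le_of_eq ?_)
  rw [flipEnergy]
  refine Finset.sum_congr rfl fun x _ => ?_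
  exact Equiv.sum_comp σ fun v => kcipStationary L p x * flipCost F x v

lemma sum_secondCost_le (p : ℝ) (hp0 : 0 < p) (hp1 : p < 1) (F : Config L → ℝ)
    (σ : Equiv.Perm (Vertex L)) :
    ∑ x, p / (1 - p) * kcipStationary L p x * ∑ w, secondCost F x w (σ w) ≤ flipEnergy p F := by
  refine le_trans ?_ (sum_second_le p hp0 hp1 F σ)
  refine Finset.sum_le_sum fun x _ => ?_
  rw [Finset.mul_sum]
  refine Finset.sum_le_sum fun w _ => ?_
  rw [secondCost]
  split_ifs with h
  · exact mul_le_mul_of_nonneg_right (stationary_le_addP p hp0 hp1 x w h) (flipCost_nonneg F _ _)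
  · simp

lemma sum_edge_le (hL : 2 ≤ L) (p : ℝ) (hp0 : 0 < p) (hp1 : p ≤ 1 / 2) (F : Config L → ℝ)
    (e : Vertex L) (he : ∀ w, adj (w + e) w) :
    ∑ x, p / (1 - p) * kcipStationary L p x * ∑ w, (addInc F x (w + e) - addInc F x w) ^ 2 ≤
      12 * flipEnergy p F := by
  have hlt : p < 1 := by linarith
  have h1p : 0 < 1 - p := by linarith
  have hlam : p / (1 - p) ≤ 1 := by rw [div_le_one h1p]; linarith
  have hE0 : ∑ x, p / (1 - p) * kcipStationary L p x * ∑ w, flipCost F x w ≤ flipEnergy p F := by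
    rw [flipEnergy]
    refine Finset.sum_le_sum fun x _ => ?_
    rw [← Finset.mul_sum]
    have a := stationary_nonneg p hp0 hlt x
    have b : 0 ≤ ∑ w, flipCost F x w := Finset.sum_nonneg fun w _ => flipCost_nonneg F x w
    refine mul_le_mul_of_nonneg_right ?_ b
    nlinarith
  have h1 := sum_secondCost_le p hp0 hlt F (Equiv.addRight e)
  have h2 := sum_secondCost_le p hp0 hlt F (Equiv.addRight (-e))
  have key : ∀ x : Config L, ∑ w, (addInc F x (w + e) - addInc F x w) ^ 2 ≤
      3 * (2 * ∑ w, flipCost F x w + ∑ w, secondCost F x w (Equiv.addRight e w) +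
        ∑ w, secondCost F x w (Equiv.addRight (-e) w)) := by
    intro x
    have s1 : ∑ w, flipCost F x (w + e) = ∑ w, flipCost F x w :=
      Equiv.sum_comp (Equiv.addRight e) fun w => flipCost F x w
    have s2 : ∑ w, secondCost F x (w + e) w = ∑ w, secondCost F x w (Equiv.addRight (-e) w) := by
      rw [← Equiv.sum_comp (Equiv.addRight e) fun w => secondCost F x w (Equiv.addRight (-e) w)]
      simp
    calc ∑ w, (addInc F x (w + e) - addInc F x w) ^ 2
        ≤ ∑ w, 3 * (flipCost F x (w + e) + flipCost F x w +
            secondCost F x (w + e) w + secondCost F x w (w + e)) :=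
          Finset.sum_le_sum fun w _ => addInc_edge hL F x (he w)
      _ = _ := by
          rw [← Finset.mul_sum, Finset.sum_add_distrib, Finset.sum_add_distrib,
            Finset.sum_add_distrib, s1, s2]
          simp only [Equiv.coe_addRight]
          ring
  calc ∑ x, p / (1 - p) * kcipStationary L p x * ∑ w, (addInc F x (w + e) - addInc F x w) ^ 2
      ≤ ∑ x, p / (1 - p) * kcipStationary L p x *
        (3 * (2 * ∑ w, flipCost F x w + ∑ w, secondCost F x w (Equiv.addRight e w) +
          ∑ w, secondCost F x w (Equiv.addRight (-e) w))) := by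
        refine Finset.sum_le_sum fun x _ => mul_le_mul_of_nonneg_left (key x) ?_
        exact mul_nonneg (by positivity) (stationary_nonneg p hp0 hlt x)
    _ = 6 * (∑ x, p / (1 - p) * kcipStationary L p x * ∑ w, flipCost F x w) +
        3 * (∑ x, p / (1 - p) * kcipStationary L p x *
          ∑ w, secondCost F x w (Equiv.addRight e w)) +
        3 * (∑ x, p / (1 - p) * kcipStationary L p x *
          ∑ w, secondCost F x w (Equiv.addRight (-e) w)) := by
        rw [Finset.mul_sum, Finset.mul_sum, Finset.mul_sum, ← Finset.sum_add_distrib,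
          ← Finset.sum_add_distrib]
        exact Finset.sum_congr rfl fun x _ => by ring
    _ ≤ _ := by linarith

/-- `λ ∑ₓ π(x) ∑ (F(x ∪ {w}) - F(x))²`, the inner sum over the available sites `w`. -/
def addEnergy (p : ℝ) (F : Config L → ℝ) : ℝ :=
  ∑ x, p / (1 - p) * kcipStationary L p x * ∑ w, addInc F x w ^ 2

lemma addEnergy_le (hL : 2 ≤ L) (p : ℝ) (hp0 : 0 < p) (hp1 : p ≤ 1 / 2) (F : Config L → ℝ) :
    addEnergy p F ≤
      256 * Real.log ((L : ℝ) ^ 2) ^ 2 * (L : ℝ) ^ 2 * (24 * flipEnergy p F) := by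
  have hlt : p < 1 := by linarith
  have h1p : 0 < 1 - p := by linarith
  set T := 256 * Real.log ((L : ℝ) ^ 2) ^ 2 * (L : ℝ) ^ 2 with hT
  have hT0 : 0 ≤ T := by positivity
  have hr := sum_edge_le hL p hp0 hp1 F (1, 0) adj_add_right
  have hu := sum_edge_le hL p hp0 hp1 F (0, 1) adj_add_up
  have key : ∀ x : Config L, p / (1 - p) * kcipStationary L p x * ∑ w, addInc F x w ^ 2 ≤
      T * (p / (1 - p) * kcipStationary L p x * torusEnergy (addInc F x)) := by
    intro x
    rcases Nat.eq_zero_or_pos (numParticles x) with h | h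
    · have : kcipStationary L p x = 0 := by simp [kcipStationary, h]
      simp [this]
    · -- the increment vanishes at an occupied site
      obtain ⟨u, hu⟩ := (numParticles_pos_iff x).1 h
      have hz : addInc F x u = 0 := by
        rw [addInc, if_neg]
        rintro ⟨h1, -⟩
        simp [hu] at h1
      have := torus_poincare hL (addInc F x) u hz
      have hn : 0 ≤ p / (1 - p) * kcipStationary L p x :=
        mul_nonneg (by positivity) (stationary_nonneg p hp0 hlt x)
      calc _ ≤ p / (1 - p) * kcipStationary L p x * (T * torusEnergy (addInc F x)) :=
            mul_le_mul_of_nonneg_left this hn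
        _ = _ := by ring
  calc addEnergy p F
      ≤ ∑ x, T * (p / (1 - p) * kcipStationary L p x * torusEnergy (addInc F x)) :=
        Finset.sum_le_sum fun x _ => key x
    _ = T * (∑ x, p / (1 - p) * kcipStationary L p x *
          ∑ w, (addInc F x (w + (1, 0)) - addInc F x w) ^ 2 +
        ∑ x, p / (1 - p) * kcipStationary L p x *
          ∑ w, (addInc F x (w + (0, 1)) - addInc F x w) ^ 2) := by
        rw [← Finset.mul_sum, ← Finset.sum_add_distrib]
        congr 1
        refine Finset.sum_congr rfl fun x _ => ?_
        rw [torusEnergy, Finset.sum_add_distrib]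
        ring
    _ ≤ T * (24 * flipEnergy p F) := by
        refine mul_le_mul_of_nonneg_left ?_ hT0
        linarith

/-! ### Configurations with one particle -/

/-- The configuration with a single particle at `u`. -/
def single (u : Vertex L) : Config L := addP (fun _ => false) u

lemma numParticles_single (u : Vertex L) : numParticles (single u) = 1 := by
  rw [single, numParticles_addP _ _ rfl]
  simp [numParticles]

lemma stationary_single (p : ℝ) (u v : Vertex L) :
    kcipStationary L p (single u) = kcipStationary L p (single v) := by
  rw [kcipStationary, kcipStationary, numParticles_single, numParticles_single]

lemma sum_single_second_le (p : ℝ) (hp0 : 0 < p) (hp1 : p < 1) (F : Config L → ℝ)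
    (σ : Equiv.Perm (Vertex L)) :
    ∑ u, kcipStationary L p (single u) * flipCost F (single u) (σ u) ≤ flipEnergy p F := by
  refine le_trans ?_ (sum_second_le p hp0 hp1 F σ)
  refine le_trans (le_of_eq ?_) (Finset.single_le_sum (f := fun x : Config L => ∑ w,
    (if x w = false then kcipStationary L p (addP x w) * flipCost F (addP x w) (σ w) else 0))
    (fun x _ => Finset.sum_nonneg fun w _ => ?_) (Finset.mem_univ (fun _ => false)))
  · simp [single]
  · split_ifs
    · exact mul_nonneg (stationary_nonneg p hp0 hp1 _) (flipCost_nonneg F _ _)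
    · exact le_rfl

lemma single_edge (hL : 2 ≤ L) (F : Config L → ℝ) {u v : Vertex L} (h : adj u v) :
    (F (single u) - F (single v)) ^ 2 ≤
      2 * flipCost F (single u) v + 2 * flipCost F (single v) u := by
  have e1 := secondCost_of_adj F (fun _ => false) h rfl
  have e2 := secondCost_of_adj F (fun _ => false) (adj_symm h) rfl
  rw [← addP_comm _ (adj_ne hL h)] at e2
  rw [secondCost, if_pos rfl] at e1 e2
  rw [single, single, e1, e2]
  generalize F (addP _ u) = a, F (addP _ v) = b, F (addP (addP _ u) v) = d
  nlinarith [sq_nonneg ((a - d) + (b - d))]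

lemma single_dir_le (hL : 2 ≤ L) (p : ℝ) (hp0 : 0 < p) (hp1 : p < 1) (F : Config L → ℝ)
    (e : Vertex L) (he : ∀ w, adj (w + e) w) :
    kcipStationary L p (single 0) * ∑ u, (F (single (u + e)) - F (single u)) ^ 2 ≤
      4 * flipEnergy p F := by
  have h1 := sum_single_second_le p hp0 hp1 F (Equiv.addRight e)
  have h2 := sum_single_second_le p hp0 hp1 F (Equiv.addRight (-e))
  have e2 : ∑ u, kcipStationary L p (single u) * flipCost F (single u) (Equiv.addRight (-e) u) =
      ∑ u, kcipStationary L p (single 0) * flipCost F (single (u + e)) u := by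
    rw [← Equiv.sum_comp (Equiv.addRight e)]
    refine Finset.sum_congr rfl fun u _ => ?_
    rw [stationary_single p _ 0]
    simp
  have e1 : ∑ u, kcipStationary L p (single u) * flipCost F (single u) (Equiv.addRight e u) =
      ∑ u, kcipStationary L p (single 0) * flipCost F (single u) (u + e) := by
    refine Finset.sum_congr rfl fun u _ => ?_
    rw [stationary_single p _ 0]
    simp
  rw [e1, ← Finset.mul_sum] at h1
  rw [e2, ← Finset.mul_sum] at h2
  have hs := stationary_nonneg p hp0 hp1 (single (0 : Vertex L))
  calc kcipStationary L p (single 0) * ∑ u, (F (single (u + e)) - F (single u)) ^ 2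
      ≤ kcipStationary L p (single 0) * ∑ u, (2 * flipCost F (single (u + e)) u +
          2 * flipCost F (single u) (u + e)) :=
        mul_le_mul_of_nonneg_left (Finset.sum_le_sum fun u _ => single_edge hL F (he u)) hs
    _ = 2 * (kcipStationary L p (single 0) * ∑ u, flipCost F (single (u + e)) u) +
        2 * (kcipStationary L p (single 0) * ∑ u, flipCost F (single u) (u + e)) := by
        rw [Finset.sum_add_distrib, ← Finset.mul_sum, ← Finset.mul_sum]
        ring
    _ ≤ _ := by linarith

lemma sum_single_le (hL : 2 ≤ L) (p : ℝ) (hp0 : 0 < p) (hp1 : p < 1) (F : Config L → ℝ) :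
    ∑ u, kcipStationary L p (single u) * (F (single u) - F (single 0)) ^ 2 ≤
      256 * Real.log ((L : ℝ) ^ 2) ^ 2 * (L : ℝ) ^ 2 * (8 * flipEnergy p F) := by
  set T := 256 * Real.log ((L : ℝ) ^ 2) ^ 2 * (L : ℝ) ^ 2 with hT
  have hT0 : 0 ≤ T := by positivity
  have hr := single_dir_le hL p hp0 hp1 F (1, 0) adj_add_right
  have hu := single_dir_le hL p hp0 hp1 F (0, 1) adj_add_up
  have hs := stationary_nonneg p hp0 hp1 (single (0 : Vertex L))
  have hP := torus_poincare hL (fun u => F (single u) - F (single 0)) 0 (by simp)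
  have e1 : ∑ u, kcipStationary L p (single u) * (F (single u) - F (single 0)) ^ 2 =
      kcipStationary L p (single 0) * ∑ u, (F (single u) - F (single 0)) ^ 2 := by
    rw [Finset.mul_sum]
    exact Finset.sum_congr rfl fun u _ => by rw [stationary_single p u 0]
  rw [e1]
  refine (mul_le_mul_of_nonneg_left hP hs).trans ?_
  rw [torusEnergy, Finset.sum_add_distrib]
  simp only [sub_sub_sub_cancel_right]
  rw [mul_left_comm]
  refine mul_le_mul_of_nonneg_left ?_ hT0
  rw [mul_add]
  linarith

end Adding

/-! ### Recursion over the number of particles -/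

section Levels

variable {L : ℕ} [NeZero L]

lemma mem_omegaFinset {i : ℕ} {x : Config L} : x ∈ omegaFinset L i ↔ x ∈ OmegaSet L i := by
  simp [omegaFinset]

/-- Removing one of its `i + 1` particles from a configuration of `Ω_{i+1}` leaves a configuration
of `Ω_i` to which the removed site is available. -/
lemma sum_level_le (i : ℕ) (G : Config L → ℝ) (hG : ∀ x, 0 ≤ G x) :
    ((i : ℝ) + 1) * ∑ y ∈ omegaFinset L (i + 1), G y ≤
      ∑ x ∈ omegaFinset L i, ∑ w, if avail x w then G (addP x w) else 0 := by
  have h1 : ((i : ℝ) + 1) * ∑ y ∈ omegaFinset L (i + 1), G y =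
      ∑ y ∈ omegaFinset L (i + 1), ∑ w, if y w = true then G y else 0 := by
    rw [Finset.mul_sum]
    refine Finset.sum_congr rfl fun y hy => ?_
    have hn : numParticles y = i + 1 := (mem_omegaFinset.1 hy).1
    rw [← Finset.sum_filter, Finset.sum_const, nsmul_eq_mul]
    have : #(univ.filter fun w => y w = true) = i + 1 := hn
    rw [this]
    push_cast
    ring
  rw [h1, Finset.sum_comm, Finset.sum_comm (s := omegaFinset L i)]
  refine Finset.sum_le_sum fun w _ => ?_
  rw [← Finset.sum_filter, ← Finset.sum_filter]
  have h := Finset.sum_image (f := G) (g := fun x : Config L => addP x w)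
    (s := (omegaFinset L i).filter fun x => avail x w) (by
      intro x hx y hy h
      have hx2 := (Finset.mem_filter.1 (Finset.mem_coe.1 hx)).2
      have hy2 := (Finset.mem_filter.1 (Finset.mem_coe.1 hy)).2
      exact addP_injOn w hx2.1 hy2.1 h)
  rw [← h]
  refine Finset.sum_le_sum_of_subset_of_nonneg ?_ fun z _ _ => hG z
  intro y hy
  obtain ⟨hy1, hyw⟩ := Finset.mem_filter.1 hy
  obtain ⟨hn, hind⟩ := mem_omegaFinset.1 hy1
  have hadd : addP (Function.update y w false) w = y := by
    rw [addP, Function.update_idem, ← hyw, Function.update_eq_self]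
  have hle : ∀ u, Function.update y w false u = true → y u = true := by
    intro u hu
    by_cases huw : u = w
    · rw [huw]; exact hyw
    · rwa [Function.update_of_ne huw] at hu
  refine Finset.mem_image.2 ⟨Function.update y w false, Finset.mem_filter.2 ⟨?_, ?_, ?_⟩, hadd⟩
  · refine mem_omegaFinset.2 ⟨?_, ?_⟩
    · have := numParticles_addP (Function.update y w false) w (by simp)
      rw [hadd, hn] at this
      omega
    · rintro u v huv ⟨hu, hv⟩
      exact hind u v huv ⟨hle u hu, hle v hv⟩
  · simp
  · rintro ⟨u, hu, hxu⟩
    exact hind u w hu ⟨hle u hxu, hyw⟩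

/-- The contribution of `Ω_i` to `∑ π (F - a)²`. -/
def levelVar (p : ℝ) (F : Config L → ℝ) (a : ℝ) (i : ℕ) : ℝ :=
  ∑ x ∈ omegaFinset L i, kcipStationary L p x * (F x - a) ^ 2

lemma levelVar_nonneg (p : ℝ) (hp0 : 0 < p) (hp1 : p < 1) (F : Config L → ℝ) (a : ℝ) (i : ℕ) :
    0 ≤ levelVar p F a i :=
  Finset.sum_nonneg fun x _ => mul_nonneg (stationary_nonneg p hp0 hp1 x) (sq_nonneg _)

lemma levelVar_one_le (p : ℝ) (hp0 : 0 < p) (hp1 : p < 1) (F : Config L → ℝ) (a : ℝ) :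
    levelVar p F a 1 ≤ ∑ u, kcipStationary L p (single u) * (F (single u) - a) ^ 2 := by
  have hG : ∀ x : Config L, 0 ≤ kcipStationary L p x * (F x - a) ^ 2 := fun x =>
    mul_nonneg (stationary_nonneg p hp0 hp1 x) (sq_nonneg _)
  have h := sum_level_le 0 (fun x => kcipStationary L p x * (F x - a) ^ 2) hG
  rw [Nat.cast_zero, zero_add, one_mul, zero_add] at h
  refine h.trans ?_
  have h0 : omegaFinset L 0 ⊆ {fun _ => false} := by
    intro x hx
    have hn : numParticles x = 0 := (mem_omegaFinset.1 hx).1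
    rw [Finset.mem_singleton]
    funext v
    by_contra hv
    have := (numParticles_pos_iff x).2 ⟨v, by simpa using hv⟩
    omega
  refine (Finset.sum_le_sum_of_subset_of_nonneg h0 ?_).trans ?_
  · intro x _ _
    refine Finset.sum_nonneg fun w _ => ?_
    split_ifs
    · exact hG _
    · exact le_rfl
  · rw [Finset.sum_singleton]
    refine Finset.sum_le_sum fun w _ => ?_
    split_ifs
    · exact le_rfl
    · exact hG _

lemma addEnergy_nonneg (p : ℝ) (hp0 : 0 < p) (hp1 : p < 1) (F : Config L → ℝ) :
    0 ≤ addEnergy p F := by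
  have h1p : 0 < 1 - p := by linarith
  exact Finset.sum_nonneg fun x _ => mul_nonneg
    (mul_nonneg (by positivity) (stationary_nonneg p hp0 hp1 x))
    (Finset.sum_nonneg fun w _ => sq_nonneg _)

lemma levelVar_succ_le (p : ℝ) (hp0 : 0 < p) (hp1 : p < 1) (F : Config L → ℝ) (a : ℝ) (i : ℕ)
    (hi : 1 ≤ i) :
    ((i : ℝ) + 1) * levelVar p F a (i + 1) ≤
      2 * (p / (1 - p) * (L : ℝ) ^ 2) * levelVar p F a i + 2 * addEnergy p F := by
  have h1p : 0 < 1 - p := by linarith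
  have hG : ∀ x : Config L, 0 ≤ kcipStationary L p x * (F x - a) ^ 2 := fun x =>
    mul_nonneg (stationary_nonneg p hp0 hp1 x) (sq_nonneg _)
  have hlam : 0 ≤ p / (1 - p) := by positivity
  refine (sum_level_le i (fun x => kcipStationary L p x * (F x - a) ^ 2) hG).trans ?_
  have key : ∀ x ∈ omegaFinset L i, (∑ w, if avail x w then
      kcipStationary L p (addP x w) * (F (addP x w) - a) ^ 2 else 0) ≤
      2 * (p / (1 - p) * (L : ℝ) ^ 2) * (kcipStationary L p x * (F x - a) ^ 2) +
      2 * (p / (1 - p) * kcipStationary L p x * ∑ w, addInc F x w ^ 2) := by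
    intro x hx
    have hn : numParticles x = i := (mem_omegaFinset.1 hx).1
    have hs := stationary_nonneg p hp0 hp1 x
    have e : 2 * (p / (1 - p) * (L : ℝ) ^ 2) * (kcipStationary L p x * (F x - a) ^ 2) =
        ∑ _w : Vertex L, 2 * (p / (1 - p) * (kcipStationary L p x * (F x - a) ^ 2)) := by
      rw [Finset.sum_const, nsmul_eq_mul, Finset.card_univ, card_vertex]
      ring
    rw [e, Finset.mul_sum, Finset.mul_sum, ← Finset.sum_add_distrib]
    refine Finset.sum_le_sum fun w _ => ?_
    split_ifs with hw
    · have h1 := stationary_addP p x (by omega) w hw.1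
      have h2 : kcipStationary L p (addP x w) = p / (1 - p) * kcipStationary L p x := by
        rw [div_mul_eq_mul_div, eq_div_iff h1p.ne', h1, mul_comm]
      rw [h2, addInc, if_pos hw]
      have h3 : (F (addP x w) - a) ^ 2 ≤ 2 * (F x - a) ^ 2 + 2 * (F (addP x w) - F x) ^ 2 := by
        nlinarith [sq_nonneg ((F x - a) - (F (addP x w) - F x))]
      calc _ ≤ p / (1 - p) * kcipStationary L p x *
            (2 * (F x - a) ^ 2 + 2 * (F (addP x w) - F x) ^ 2) :=
            mul_le_mul_of_nonneg_left h3 (mul_nonneg hlam hs)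
        _ = _ := by ring
    · positivity
  refine (Finset.sum_le_sum key).trans ?_
  rw [Finset.sum_add_distrib, ← Finset.mul_sum, ← Finset.mul_sum]
  refine add_le_add le_rfl (mul_le_mul_of_nonneg_left ?_ (by norm_num))
  exact Finset.sum_le_sum_of_subset_of_nonneg (Finset.subset_univ _) fun x _ _ => mul_nonneg
    (mul_nonneg hlam (stationary_nonneg p hp0 hp1 x)) (Finset.sum_nonneg fun w _ => sq_nonneg _)

/-- A sequence with `(i + 1) W_{i+1} ≤ m W_i + 2 g` for `i ≥ 1` is bounded through the partial sums
of the exponential series. -/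
lemma recursion_bound (W : ℕ → ℝ) (m g : ℝ) (hm : 0 ≤ m) (hg : 0 ≤ g) (hW : 0 ≤ W 1)
    (h : ∀ i : ℕ, 1 ≤ i → ((i : ℝ) + 1) * W (i + 1) ≤ m * W i + 2 * g) (i : ℕ) (hi : 1 ≤ i) :
    W i ≤ Real.exp m * (W 1 + 2 * g) := by
  have hD : 0 ≤ W 1 + 2 * g := by linarith
  have key : ∀ i, 1 ≤ i → W i ≤ (∑ j ∈ range i, m ^ j / (j.factorial : ℝ)) * (W 1 + 2 * g) := by
    intro i hi
    induction i, hi using Nat.le_induction with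
    | base => simp; linarith
    | succ i hi ih =>
      have hi0 : (0 : ℝ) < (i : ℝ) + 1 := by positivity
      have h1 : W (i + 1) ≤ m / ((i : ℝ) + 1) * W i + 2 * g / ((i : ℝ) + 1) := by
        rw [div_mul_eq_mul_div, ← add_div, le_div_iff₀ hi0]
        linarith [h i hi]
      have h2 : 2 * g / ((i : ℝ) + 1) ≤ W 1 + 2 * g := by
        refine (div_le_self (by linarith) ?_).trans (by linarith)
        have : (0 : ℝ) ≤ i := by positivity
        linarith
      have h3 : m / ((i : ℝ) + 1) * ∑ j ∈ range i, m ^ j / (j.factorial : ℝ) ≤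
          ∑ j ∈ range i, m ^ (j + 1) / ((j + 1).factorial : ℝ) := by
        rw [Finset.mul_sum]
        refine Finset.sum_le_sum fun j hj => ?_
        have hji : (j : ℝ) + 1 ≤ (i : ℝ) + 1 := by
          have := (Finset.mem_range.1 hj).le
          have : (j : ℝ) ≤ i := by exact_mod_cast this
          linarith
        have hj0 : (0 : ℝ) < (j : ℝ) + 1 := by positivity
        rw [Nat.factorial_succ, div_mul_div_comm, pow_succ']
        push_cast
        gcongr
      rw [Finset.sum_range_succ', add_mul]
      have h4 : m / ((i : ℝ) + 1) * W i ≤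
          (∑ j ∈ range i, m ^ (j + 1) / ((j + 1).factorial : ℝ)) * (W 1 + 2 * g) := by
        calc _ ≤ m / ((i : ℝ) + 1) * ((∑ j ∈ range i, m ^ j / (j.factorial : ℝ)) *
              (W 1 + 2 * g)) := by gcongr
          _ = (m / ((i : ℝ) + 1) * ∑ j ∈ range i, m ^ j / (j.factorial : ℝ)) *
              (W 1 + 2 * g) := by ring
          _ ≤ _ := by gcongr
      simp only [pow_zero, Nat.factorial_zero, Nat.cast_one, div_one, one_mul]
      linarith
  exact (key i hi).trans (mul_le_mul_of_nonneg_right (Real.sum_le_exp_of_nonneg hm i) hD)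

lemma mem_omegaUnionSet {k : ℕ} {x : Config L} :
    x ∈ omegaUnionSet L k ↔ ∃ i, (1 ≤ i ∧ i ≤ k) ∧ x ∈ OmegaSet L i := by
  simp [omegaUnionSet]

lemma sum_union_le (p : ℝ) (hp0 : 0 < p) (hp1 : p < 1) (F : Config L → ℝ) (a : ℝ) (k : ℕ) :
    ∑ x : {x // x ∈ omegaUnionSet L k}, kcipStationary L p x * (F x - a) ^ 2 ≤
      k * (Real.exp (2 * (p / (1 - p) * (L : ℝ) ^ 2)) *
        (levelVar p F a 1 + 2 * addEnergy p F)) := by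
  have h1p : 0 < 1 - p := by linarith
  have hG : ∀ x : Config L, 0 ≤ kcipStationary L p x * (F x - a) ^ 2 := fun x =>
    mul_nonneg (stationary_nonneg p hp0 hp1 x) (sq_nonneg _)
  have h1 : ∑ x : {x // x ∈ omegaUnionSet L k}, kcipStationary L p x * (F x - a) ^ 2 =
      ∑ x ∈ (Finset.Icc 1 k).biUnion (fun i => omegaFinset L i), kcipStationary L p x * (F x - a) ^ 2 := by
    symm
    apply Finset.sum_subtype
    intro x
    simp only [Finset.mem_biUnion, Finset.mem_Icc, mem_omegaFinset, mem_omegaUnionSet]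
  rw [h1]
  have h2 : ∑ x ∈ (Finset.Icc 1 k).biUnion (fun i => omegaFinset L i), kcipStationary L p x * (F x - a) ^ 2
      = ∑ i ∈ Finset.Icc 1 k, levelVar p F a i := by
    rw [Finset.sum_biUnion]
    · rfl
    · intro i _ j _ hij
      refine Finset.disjoint_left.2 fun x hx hx' => hij ?_
      rw [← (mem_omegaFinset.1 hx).1, (mem_omegaFinset.1 hx').1]
  rw [h2]
  refine (Finset.sum_le_card_nsmul _ _ _ fun i hi => recursion_bound (levelVar p F a)
    (2 * (p / (1 - p) * (L : ℝ) ^ 2)) (addEnergy p F) (by positivity)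
    (addEnergy_nonneg p hp0 hp1 F) (levelVar_nonneg p hp0 hp1 F a 1)
    (fun j hj => levelVar_succ_le p hp0 hp1 F a j hj) i (Finset.mem_Icc.1 hi).1).trans ?_
  rw [nsmul_eq_mul, Nat.card_Icc, Nat.add_sub_cancel]

/-- Total mass of `∪_{i ≤ k} Ω_i`. -/
lemma mass_le (p : ℝ) (hp0 : 0 < p) (hp1 : p < 1) (k : ℕ) :
    ∑ x : {x // x ∈ omegaUnionSet L k}, kcipStationary L p x ≤
      k * (Real.exp (2 * (p / (1 - p) * (L : ℝ) ^ 2)) *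
        ((L : ℝ) ^ 2 * kcipStationary L p (single (0 : Vertex L)))) := by
  have h := sum_union_le (L := L) p hp0 hp1 (fun _ => 1) 0 k
  have h1 := levelVar_one_le (L := L) p hp0 hp1 (fun _ => 1) 0
  have hA : addEnergy (L := L) p (fun _ => 1) = 0 := by
    simp [addEnergy, addInc]
  have h2 : ∑ u : Vertex L, kcipStationary L p (single u) =
      (L : ℝ) ^ 2 * kcipStationary L p (single (0 : Vertex L)) := by
    rw [Finset.sum_congr rfl fun u _ => stationary_single p u 0, Finset.sum_const, nsmul_eq_mul,
      Finset.card_univ, card_vertex]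
  rw [hA] at h
  simp only [sub_zero, one_pow, mul_one, mul_zero, add_zero] at h h1
  rw [h2] at h1
  exact h.trans (by gcongr)

lemma stationary_lower (p : ℝ) (hp0 : 0 < p) (hp1 : p < 1) (k : ℕ)
    (x : {x // x ∈ omegaUnionSet L k}) :
    p ^ k * kcipStationary L p (single (0 : Vertex L)) ≤ kcipStationary L p x := by
  obtain ⟨x, hx⟩ := x
  obtain ⟨i, ⟨hi1, hik⟩, hn, -⟩ := mem_omegaUnionSet.1 hx
  have hle := numParticles_le x
  rw [hn] at hle
  have hZ := kcip_norm_pos (L := L) p hp0 hp1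
  have h1p : 0 < 1 - p := by linarith
  rw [kcipStationary, kcipStationary, numParticles_single, hn, if_pos (by omega),
    if_pos (by omega), ← mul_div_assoc]
  refine div_le_div_of_nonneg_right ?_ hZ.le
  have h1 : p ^ k * p ^ 1 ≤ p ^ i := by
    rw [← pow_add]
    exact pow_le_pow_of_le_one hp0.le hp1.le (by omega)
  have h2 : (1 - p) ^ (L ^ 2 - 1) ≤ (1 - p) ^ (L ^ 2 - i) :=
    pow_le_pow_of_le_one h1p.le (by linarith) (by omega)
  rw [← mul_assoc]
  gcongr

lemma condDist_lower (p : ℝ) (hp0 : 0 < p) (hp1 : p < 1) (k : ℕ) (hk : 1 ≤ k)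
    (x : {x // x ∈ omegaUnionSet L k}) :
    p ^ k / (k * (Real.exp (2 * (p / (1 - p) * (L : ℝ) ^ 2)) * (L : ℝ) ^ 2)) ≤
      condDist (kcipStationary L p) (omegaUnionSet L k) x := by
  have hL : (0 : ℝ) < L := Nat.cast_pos.2 (Nat.pos_of_ne_zero (NeZero.ne L))
  have hk0 : (0 : ℝ) < k := by exact_mod_cast hk
  have hs : 0 < kcipStationary L p (single (0 : Vertex L)) :=
    stationary_pos p hp0 hp1 _ (by rw [numParticles_single]; exact one_pos)
  have hZ : 0 < ∑ y : {x // x ∈ omegaUnionSet L k}, kcipStationary L p y := by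
    refine Finset.sum_pos (fun y _ => ?_) ⟨x, Finset.mem_univ _⟩
    exact (by positivity : 0 < p ^ k * kcipStationary L p (single (0 : Vertex L))).trans_le
      (stationary_lower p hp0 hp1 k y)
  rw [condDist, div_le_div_iff₀ (by positivity) hZ]
  calc p ^ k * ∑ y : {x // x ∈ omegaUnionSet L k}, kcipStationary L p y
      ≤ p ^ k * (k * (Real.exp (2 * (p / (1 - p) * (L : ℝ) ^ 2)) *
        ((L : ℝ) ^ 2 * kcipStationary L p (single (0 : Vertex L))))) := by
        gcongr
        exact mass_le p hp0 hp1 k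
    _ = (p ^ k * kcipStationary L p (single (0 : Vertex L))) *
        (k * (Real.exp (2 * (p / (1 - p) * (L : ℝ) ^ 2)) * (L : ℝ) ^ 2)) := by ring
    _ ≤ _ := by
        gcongr
        exact stationary_lower p hp0 hp1 k x

/-- Poincaré inequality on `∪_{i ≤ k} Ω_i`, in terms of the full process. -/
lemma union_poincare (hL : 2 ≤ L) (p : ℝ) (hp0 : 0 < p) (hp1 : p ≤ 1 / 2) (F : Config L → ℝ)
    (k : ℕ) :
    ∑ x : {x // x ∈ omegaUnionSet L k}, kcipStationary L p x * (F x - F (single 0)) ^ 2 ≤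
      k * (Real.exp (2 * (p / (1 - p) * (L : ℝ) ^ 2)) *
        (256 * Real.log ((L : ℝ) ^ 2) ^ 2 * (L : ℝ) ^ 2 *
          (56 * (2 * (L : ℝ) ^ 2 / p * energy (kcipKernel L p) (kcipStationary L p) F)))) := by
  have hlt : p < 1 := by linarith
  have hL0 : (0 : ℝ) < L := Nat.cast_pos.2 (Nat.pos_of_ne_zero (NeZero.ne L))
  refine (sum_union_le p hp0 hlt F (F (single 0)) k).trans ?_
  have h1 := (levelVar_one_le p hp0 hlt F (F (single 0))).trans (sum_single_le hL p hp0 hlt F)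
  have h2 := addEnergy_le hL p hp0 hp1 F
  have h3 := flipEnergy_le p hp0 hlt F
  have h4 : flipEnergy p F ≤
      2 * (L : ℝ) ^ 2 / p * energy (kcipKernel L p) (kcipStationary L p) F := by
    calc flipEnergy p F = 2 * (L : ℝ) ^ 2 / p * (p / (2 * (L : ℝ) ^ 2) * flipEnergy p F) := by
          field_simp
      _ ≤ _ := by gcongr
  gcongr
  calc levelVar p F (F (single 0)) 1 + 2 * addEnergy p F
      ≤ 256 * Real.log ((L : ℝ) ^ 2) ^ 2 * (L : ℝ) ^ 2 * (56 * flipEnergy p F) := by linarith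
    _ ≤ _ := by gcongr

end Levels

/-! ### The mixing time bound -/

section Mixing

/-- The general mixing bound applied to the trace on `∪_{i ≤ k} Ω_i`. -/
lemma trace_mixing_le {L : ℕ} [NeZero L] (hL : 2 ≤ L) (p : ℝ) (hp0 : 0 < p) (hp1 : p ≤ 1 / 2)
    (k : ℕ) (hk : 1 ≤ k) (hkL : 8 * (k : ℝ) ≤ (L : ℝ) ^ 2) (E : ℝ)
    (hE : Real.exp (2 * (p / (1 - p) * (L : ℝ) ^ 2)) ≤ E) (t : ℕ) (ht0 : 0 < t)
    (ht : Real.exp (-(t / (k * (E * (256 * Real.log ((L : ℝ) ^ 2) ^ 2 * (L : ℝ) ^ 2 *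
      (56 * (2 * (L : ℝ) ^ 2 / p))))))) < p ^ k / (k * (E * (L : ℝ) ^ 2)) / 4) :
    mixingTime (traceKernel (kcipKernel L p) (omegaUnionSet L k))
      (condDist (kcipStationary L p) (omegaUnionSet L k)) ≤ t := by
  have hlt : p < 1 := by linarith
  have hL0 : (0 : ℝ) < L := Nat.cast_pos.2 (Nat.pos_of_ne_zero (NeZero.ne L))
  have hL1 : (1 : ℝ) < (L : ℝ) ^ 2 := by
    have : (2 : ℝ) ≤ L := by exact_mod_cast hL
    nlinarith
  have hlog : 0 < Real.log ((L : ℝ) ^ 2) := Real.log_pos hL1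
  have hk0 : (0 : ℝ) < k := by exact_mod_cast hk
  have hE0 : 0 < E := (Real.exp_pos _).trans_le hE
  set A := omegaUnionSet L k with hA
  set K := kcipKernel L p with hKdef
  set π := kcipStationary L p with hπdef
  have hK0 : ∀ x y, 0 ≤ K x y := kcipKernel_nonneg p hp0 hlt
  have hK1 : ∀ x, ∑ y, K x y = 1 := kcipKernel_row_sum p
  have hrev : ∀ x y, π x * K x y = π y * K y x := kcipKernel_rev hL p
  have hπ : ∀ x, 0 ≤ π x := stationary_nonneg p hp0 hlt
  have hπA : ∀ x ∈ A, 0 < π x := by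
    intro x hx
    obtain ⟨i, ⟨hi, -⟩, hn, -⟩ := mem_omegaUnionSet.1 hx
    exact stationary_pos p hp0 hlt x (by omega)
  have hsA : single (0 : Vertex L) ∈ A := by
    refine mem_omegaUnionSet.2 ⟨1, ⟨le_rfl, hk⟩, numParticles_single 0, ?_⟩
    rintro u v huv ⟨hu, hv⟩
    have h1 : ∀ u : Vertex L, single (0 : Vertex L) u = true → u = 0 := by
      intro u hu
      by_contra h
      simp [single, addP, h] at hu
    exact adj_ne hL huv ((h1 u hu).trans (h1 v hv).symm)
  have hZ : 0 < ∑ y : {x // x ∈ A}, π y :=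
    Finset.sum_pos (fun y _ => hπA y y.2) ⟨⟨_, hsA⟩, Finset.mem_univ _⟩
  set Z := ∑ y : {x // x ∈ A}, π y with hZdef
  have hcond : ∀ x : {x // x ∈ A}, condDist π A x = π x / Z := fun _ => rfl
  refine mixingTime_le_of_poincare (traceKernel K A) (condDist π A)
    (fun x => by rw [hcond]; exact div_pos (hπA x x.2) hZ)
    (fun x y => hitKernel_nonneg K A hK0 x y)
    (fun x => hitKernel_row_sum K A π hπ hK0 hK1 hrev x x.2 (hπA x x.2)) ?_ ?_ ?_
    (k * (E * (256 * Real.log ((L : ℝ) ^ 2) ^ 2 * (L : ℝ) ^ 2 * (56 * (2 * (L : ℝ) ^ 2 / p)))))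
    (by positivity) ?_ (p ^ k / (k * (E * (L : ℝ) ^ 2))) (by positivity) ?_ t ht0 ht
  · intro x y
    have h : π x * traceKernel K A x y = π y * traceKernel K A y x :=
      hitKernel_rev K A π hrev x y
    rw [hcond, hcond, div_mul_eq_mul_div, div_mul_eq_mul_div, h]
  · intro x
    have h1 : K x x ≤ traceKernel K A x x := le_hitKernel K A hK0 hK1 x x x.2
    have h2 : 1 - 4 * (numParticles x.1 : ℝ) / (L : ℝ) ^ 2 ≤ K x x :=
      kcipKernel_diag p hp0 hlt x.1
    obtain ⟨i, ⟨-, hi⟩, hn, -⟩ := mem_omegaUnionSet.1 x.2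
    have h3 : (numParticles x.1 : ℝ) ≤ k := by rw [hn]; exact_mod_cast hi
    have h4 : 4 * (numParticles x.1 : ℝ) / (L : ℝ) ^ 2 ≤ 1 / 2 := by
      rw [div_le_iff₀ (by positivity)]
      linarith
    linarith
  · simp only [hcond]
    rw [← Finset.sum_div]
    exact div_self hZ.ne'
  · intro f
    obtain ⟨F, hF, hFE⟩ := exists_extension_energy K A π hπ hπA hK0 hK1 hrev f
    refine ⟨F (single 0), ?_⟩
    have h1 := union_poincare hL p hp0 hp1 F k
    have h2 : energy (traceKernel K A) (condDist π A) f = energy K π F / Z := by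
      rw [hFE, energy, energy, mul_div_assoc, Finset.sum_div]
      congr 1
      refine Finset.sum_congr rfl fun x _ => ?_
      rw [Finset.sum_div]
      refine Finset.sum_congr rfl fun y _ => ?_
      rw [hcond]
      ring
    have h3 : ∑ x : {x // x ∈ A}, condDist π A x * (f x - F (single 0)) ^ 2 =
        (∑ x : {x // x ∈ A}, π x * (F x - F (single 0)) ^ 2) / Z := by
      rw [Finset.sum_div]
      refine Finset.sum_congr rfl fun x _ => ?_
      rw [hcond, hF]
      ring
    have hen : 0 ≤ energy K π F := by
      rw [energy]
      refine mul_nonneg (by norm_num) (Finset.sum_nonneg fun x _ => Finset.sum_nonneg fun y _ => ?_)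
      exact mul_nonneg (mul_nonneg (hπ x) (hK0 x y)) (sq_nonneg _)
    rw [h2, h3, ← mul_div_assoc]
    refine div_le_div_of_nonneg_right (h1.trans ?_) hZ.le
    calc _ ≤ k * (E * (256 * Real.log ((L : ℝ) ^ 2) ^ 2 * (L : ℝ) ^ 2 *
          (56 * (2 * (L : ℝ) ^ 2 / p * energy K π F)))) := by gcongr
      _ = _ := by ring
  · intro x
    refine le_trans ?_ (condDist_lower p hp0 hlt k hk x)
    gcongr

/-- The bound for all sufficiently large tori. -/
lemma large_mixing_le (c r : ℝ) (hc : 0 < c) (hr : 0 < r) (L : ℕ) [NeZero L] (hL : 2 ≤ L)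
    (hL1 : 2 * c + 1 / c ≤ L) (hL2 : 16 * r ≤ L) (k : ℕ) (hk : 1 ≤ k)
    (hkr : (k : ℝ) ≤ r * Real.log ((L : ℝ) ^ 2)) :
    (mixingTime (traceKernel (kcipKernel L (c / (L : ℝ) ^ 2)) (omegaUnionSet L k))
        (condDist (kcipStationary L (c / (L : ℝ) ^ 2)) (omegaUnionSet L k)) : ℝ) ≤
      (28672 * Real.exp (4 * c) / c * r * (5 + 3 * r + 4 * c) + 1) * ((L : ℝ) ^ 2) ^ 3 *
        Real.log ((L : ℝ) ^ 2) ^ 13 := by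
  have hLR : (2 : ℝ) ≤ L := by exact_mod_cast hL
  have hlogL : Real.log L ≤ L := Real.log_le_self (by linarith)
  have hlog2 : Real.log ((L : ℝ) ^ 2) = 2 * Real.log L := by
    rw [Real.log_pow]; norm_num
  have hn4 : (4 : ℝ) ≤ (L : ℝ) ^ 2 := by nlinarith
  have hcinv : 0 < 1 / c := by positivity
  have hnL : (L : ℝ) ≤ (L : ℝ) ^ 2 := by nlinarith
  have hkL : 8 * (k : ℝ) ≤ (L : ℝ) ^ 2 := by
    have : r * Real.log ((L : ℝ) ^ 2) ≤ r * (2 * L) := by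
      rw [hlog2]; gcongr
    nlinarith
  have hl1 : 1 ≤ Real.log ((L : ℝ) ^ 2) := by
    have h1 : Real.log 2 ≤ Real.log L := Real.log_le_log (by norm_num) hLR
    have h2 := Real.log_two_gt_d9
    rw [hlog2]
    linarith
  set n := (L : ℝ) ^ 2 with hn
  set l := Real.log n with hl
  have hn0 : 0 < n := by linarith
  have hp0 : 0 < c / n := by positivity
  have hp1 : c / n ≤ 1 / 2 := by
    rw [div_le_iff₀ hn0]
    linarith
  have hE : Real.exp (2 * (c / n / (1 - c / n) * n)) ≤ Real.exp (4 * c) := by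
    apply Real.exp_le_exp.2
    have h1 : 0 < 1 - c / n := by linarith
    have h2 : c / n / (1 - c / n) * n = c / (1 - c / n) := by field_simp
    have h3 : c / (1 - c / n) ≤ 2 * c := by
      rw [div_le_iff₀ h1]
      nlinarith
    rw [h2]
    linarith
  have hk0 : (0 : ℝ) < k := by exact_mod_cast hk
  have hEp := Real.exp_pos (4 * c)
  set B := (5 + 3 * r + 4 * c) * l ^ 2 with hB
  have hB0 : 0 < B := by positivity
  set Γ := (k : ℝ) * (Real.exp (4 * c) * (256 * l ^ 2 * n * (56 * (2 * n / (c / n))))) with hΓ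
  have hΓ0 : 0 < Γ := by positivity
  set t := ⌈Γ * B⌉₊ with ht
  have ht0 : 0 < t := Nat.ceil_pos.2 (by positivity)
  have htB : B ≤ t / Γ := by
    rw [le_div_iff₀ hΓ0, mul_comm]
    exact Nat.le_ceil _
  have hll : l ≤ l ^ 2 := by nlinarith
  have hmain : Real.exp (-(t / Γ)) < (c / n) ^ k / (k * (Real.exp (4 * c) * n)) / 4 := by
    have hpos : 0 < (c / n) ^ k / (k * (Real.exp (4 * c) * n)) / 4 := by positivity
    rw [← Real.lt_log_iff_exp_lt hpos]
    have e1 : Real.log ((c / n) ^ k / (k * (Real.exp (4 * c) * n)) / 4) =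
        k * (Real.log c - l) - (Real.log k + (4 * c + l)) - Real.log 4 := by
      rw [Real.log_div (by positivity) (by norm_num), Real.log_div (by positivity) (by positivity),
        Real.log_pow, Real.log_div hc.ne' hn0.ne', Real.log_mul hk0.ne' (by positivity),
        Real.log_mul hEp.ne' hn0.ne', Real.log_exp]
    have e2 : -l ≤ Real.log c := by
      rw [hl, ← Real.log_inv]
      refine Real.log_le_log (by positivity) ?_
      rw [inv_le_comm₀ hn0 hc, ← one_div]
      linarith
    have e3 : Real.log k ≤ r * l := (Real.log_le_self hk0.le).trans hkr
    have e4 : Real.log 4 < 2 := by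
      have : Real.log 4 = 2 * Real.log 2 := by
        rw [show (4 : ℝ) = 2 ^ 2 by norm_num, Real.log_pow]; norm_num
      have := Real.log_two_lt_d9
      linarith
    have e5 : k * (-(2 * l)) ≤ k * (Real.log c - l) := by
      apply mul_le_mul_of_nonneg_left _ hk0.le
      linarith
    have e6 : (k : ℝ) * l ≤ r * l ^ 2 := by
      calc (k : ℝ) * l ≤ r * l * l := by gcongr
        _ = _ := by ring
    have e7 : r * l ≤ r * l ^ 2 := by gcongr
    have e8 : c ≤ c * l ^ 2 := by nlinarith
    rw [e1]
    have : B = 5 * l ^ 2 + 3 * (r * l ^ 2) + 4 * (c * l ^ 2) := by rw [hB]; ring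
    nlinarith
  have hmix := trace_mixing_le hL (c / n) hp0 hp1 k hk hkL (Real.exp (4 * c)) hE t ht0 hmain
  have h1 : (mixingTime (traceKernel (kcipKernel L (c / n)) (omegaUnionSet L k))
        (condDist (kcipStationary L (c / n)) (omegaUnionSet L k)) : ℝ) ≤ t := by
    exact_mod_cast hmix
  refine h1.trans ((Nat.ceil_lt_add_one (by positivity)).le.trans ?_)
  have hΓle : Γ ≤ 28672 * Real.exp (4 * c) / c * r * n ^ 3 * l ^ 3 := by
    calc Γ = 28672 * Real.exp (4 * c) / c * n ^ 3 * l ^ 2 * k := by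
          rw [hΓ]; field_simp; ring
      _ ≤ 28672 * Real.exp (4 * c) / c * n ^ 3 * l ^ 2 * (r * l) := by gcongr
      _ = _ := by ring
  have hl13 : l ^ 5 ≤ l ^ 13 := pow_le_pow_right₀ hl1 (by norm_num)
  have hn3 : 1 ≤ n ^ 3 * l ^ 13 :=
    one_le_mul_of_one_le_of_one_le (one_le_pow₀ (by linarith)) (one_le_pow₀ hl1)
  calc Γ * B + 1
      ≤ 28672 * Real.exp (4 * c) / c * r * n ^ 3 * l ^ 3 * B + n ^ 3 * l ^ 13 := by gcongr
    _ = 28672 * Real.exp (4 * c) / c * r * (5 + 3 * r + 4 * c) * n ^ 3 * l ^ 5 +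
        n ^ 3 * l ^ 13 := by rw [hB]; ring
    _ ≤ 28672 * Real.exp (4 * c) / c * r * (5 + 3 * r + 4 * c) * n ^ 3 * l ^ 13 +
        n ^ 3 * l ^ 13 := by gcongr
    _ = _ := by ring

/-- The mixing time of the trace, with the junk value `0` for the degenerate side length `0`. -/
def traceMix (c : ℝ) (L k : ℕ) : ℝ :=
  if h : L = 0 then 0 else
    haveI : NeZero L := ⟨h⟩
    (mixingTime (traceKernel (kcipKernel L (c / (L : ℝ) ^ 2)) (omegaUnionSet L k))
      (condDist (kcipStationary L (c / (L : ℝ) ^ 2)) (omegaUnionSet L k)) : ℝ)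

lemma traceMix_eq (c : ℝ) (L k : ℕ) [NeZero L] :
    traceMix c L k =
      (mixingTime (traceKernel (kcipKernel L (c / (L : ℝ) ^ 2)) (omegaUnionSet L k))
        (condDist (kcipStationary L (c / (L : ℝ) ^ 2)) (omegaUnionSet L k)) : ℝ) := by
  rw [traceMix, dif_neg (NeZero.ne L)]

lemma traceMix_nonneg (c : ℝ) (L k : ℕ) : 0 ≤ traceMix c L k := by
  rw [traceMix]
  split_ifs
  · exact le_rfl
  · positivity

end Mixing

/-- mixing at moderate density. Fix `0 < r < ∞`. There is a constant
`C = C(r,c)` such that uniformly in `1 ≤ k ≤ r log n`, the mixing time of the trace of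
the KCIP on `∪_{i=1}^k Ω_i` satisfies `τ_mix^{(≤k)} ≤ C n³ (log n)^13`. -/
theorem kcip_moderate_density_mixing (c r : ℝ) (hc : 0 < c) (hr : 0 < r) :
    ∃ C : ℝ, 0 < C ∧
      ∀ (L : ℕ) [NeZero L], ∀ k : ℕ, 1 ≤ k → (k : ℝ) ≤ r * Real.log ((L : ℝ) ^ 2) →
        (mixingTime (traceKernel (kcipKernel L (c / (L : ℝ) ^ 2)) (omegaUnionSet L k))
            (condDist (kcipStationary L (c / (L : ℝ) ^ 2)) (omegaUnionSet L k)) : ℝ) ≤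
          C * ((L : ℝ) ^ 2) ^ 3 * Real.log ((L : ℝ) ^ 2) ^ 13 := by
  -- tori of side at least `N` are handled by `large_mixing_le`; for the others only finitely
  -- many pairs `(L, k)` satisfy `k ≤ r log (L ^ 2)`
  set N : ℕ := ⌈2 * c + 1 / c + 16 * r⌉₊ + 2 with hN
  set M : ℕ := ⌈r * Real.log ((N : ℝ) ^ 2)⌉₊ + 1 with hM
  set C₁ : ℝ := 28672 * Real.exp (4 * c) / c * r * (5 + 3 * r + 4 * c) + 1 with hC₁
  set C₂ : ℝ := ∑ L ∈ Finset.range N, ∑ k ∈ Finset.range M, traceMix c L k with hC₂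
  have hC₁0 : 0 < C₁ := by positivity
  have hC₂0 : 0 ≤ C₂ :=
    Finset.sum_nonneg fun L _ => Finset.sum_nonneg fun k _ => traceMix_nonneg c L k
  refine ⟨C₁ + C₂, by linarith, ?_⟩
  intro L _ k hk hkr
  have hk1 : (1 : ℝ) ≤ k := by exact_mod_cast hk
  -- `L = 1` is excluded, since then `log n = 0`
  have hL : 2 ≤ L := by
    have h0 := NeZero.ne L
    by_contra h
    have : L = 1 := by omega
    subst this
    norm_num at hkr
    omega
  have hLR : (2 : ℝ) ≤ L := by exact_mod_cast hL
  have hl1 : 1 ≤ Real.log ((L : ℝ) ^ 2) := by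
    have h1 : Real.log 2 ≤ Real.log L := Real.log_le_log (by norm_num) hLR
    have h2 := Real.log_two_gt_d9
    rw [Real.log_pow]
    push_cast
    linarith
  have hX : 1 ≤ ((L : ℝ) ^ 2) ^ 3 * Real.log ((L : ℝ) ^ 2) ^ 13 :=
    one_le_mul_of_one_le_of_one_le (one_le_pow₀ (one_le_pow₀ (by linarith))) (one_le_pow₀ hl1)
  rw [mul_assoc]
  by_cases hLN : N ≤ L
  · have h1 : 2 * c + 1 / c + 16 * r ≤ L := by
      have h2 := Nat.le_ceil (2 * c + 1 / c + 16 * r)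
      have h3 : ((⌈2 * c + 1 / c + 16 * r⌉₊ : ℕ) : ℝ) ≤ L := by
        exact_mod_cast (by omega : ⌈2 * c + 1 / c + 16 * r⌉₊ ≤ L)
      linarith
    have hcinv : 0 < 1 / c := by positivity
    have h2 := large_mixing_le c r hc hr L hL (by linarith) (by linarith) k hk hkr
    rw [← hC₁, mul_assoc] at h2
    nlinarith
  · have hkM : k ∈ Finset.range M := by
      rw [Finset.mem_range, hM, Nat.lt_succ_iff]
      have h1 : Real.log ((L : ℝ) ^ 2) ≤ Real.log ((N : ℝ) ^ 2) := by
        refine Real.log_le_log (by positivity) ?_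
        have : (L : ℝ) ≤ N := by exact_mod_cast (by omega : L ≤ N)
        gcongr
      have h2 : (k : ℝ) ≤ r * Real.log ((N : ℝ) ^ 2) := hkr.trans (by gcongr)
      exact_mod_cast h2.trans (Nat.le_ceil _)
    have hLmem : L ∈ Finset.range N := Finset.mem_range.2 (by omega)
    have h1 : traceMix c L k ≤ C₂ :=
      (Finset.single_le_sum (f := fun k => traceMix c L k)
        (fun k _ => traceMix_nonneg c L k) hkM).trans
      (Finset.single_le_sum (f := fun L => ∑ k ∈ Finset.range M, traceMix c L k)
        (fun L _ => Finset.sum_nonneg fun k _ => traceMix_nonneg c L k) hLmem)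
    rw [traceMix_eq] at h1
    nlinarith

end KCIP
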